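/- arXiv:1808.00587 — 2 statements merged into one kernel-verified Lean document; each statement's English description precedes it below -/
import Mathlib

section
/- Let A be a real symmetric n×n matrix, let 1 ≤ k ≤ n−1 with d := λ_{[k]}(A) − λ_{[k+1]}(A) > 0, and let Q = (Q_1, Q_2) be an orthogonal matrix whose columns are eigenvectors of A, with Q_1 ∈ ℝ^{n×k} corresponding to the k largest eigenvalues. Let Ξ be a real symmetric n×n matrix with ‖Ξ‖ ≤ d/5. Then λ_{[k]}(A+Ξ) > λ_{[k+1]}(A+Ξ), so the span W of eigenvectors corresponding to the k largest eigenvalues of A+Ξ is a well-defined k-dimensional invariant subspace of A+Ξ; moreover there exists V ∈ ℝ^{(n−k)×k} such that the columns of (Q_1 + Q_2 V)(I_k + V^T V)^{−1/2} form an orthonormal basis of W, and dist(range(Q_1), W) ≤ 4 ‖Q_1^T Ξ Q_2‖ / d. -/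
open Matrix Set

noncomputable section

variable {n m : ℕ}

/-- Feasibility for the primal SDO problem `(P_ε)` (the feasible set does not depend on `ε`). -/
def PrimalFeasible (A : Fin m → Matrix (Fin n) (Fin n) ℝ) (b : Fin m → ℝ)
    (X : Matrix (Fin n) (Fin n) ℝ) : Prop :=
  X.IsSymm ∧ (∀ i, ((A i) * X).trace = b i) ∧ X.PosSemidef

/-- Feasibility for the dual SDO problem `(D_ε)`. -/
def DualFeasible (C Cbar : Matrix (Fin n) (Fin n) ℝ)
    (A : Fin m → Matrix (Fin n) (Fin n) ℝ) (ε : ℝ)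
    (y : Fin m → ℝ) (S : Matrix (Fin n) (Fin n) ℝ) : Prop :=
  S.IsSymm ∧ (∑ i, y i • A i) + S = C + ε • Cbar ∧ S.PosSemidef

/-- The optimal value function `v(ε)` of `(P_ε)`, with values in `EReal`. -/
def vfun (C Cbar : Matrix (Fin n) (Fin n) ℝ) (A : Fin m → Matrix (Fin n) (Fin n) ℝ)
    (b : Fin m → ℝ) (ε : ℝ) : EReal :=
  sInf ((fun X => (((C + ε • Cbar) * X).trace : EReal)) '' {X | PrimalFeasible A b X})

/-- `E = {ε : v(ε) > -∞}`. -/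
def Eset (C Cbar : Matrix (Fin n) (Fin n) ℝ) (A : Fin m → Matrix (Fin n) (Fin n) ℝ)
    (b : Fin m → ℝ) : Set ℝ :=
  {ε | ⊥ < vfun C Cbar A b ε}

/-- The primal optimal set `P*(ε)`. -/
def PrimalOpt (C Cbar : Matrix (Fin n) (Fin n) ℝ) (A : Fin m → Matrix (Fin n) (Fin n) ℝ)
    (b : Fin m → ℝ) (ε : ℝ) : Set (Matrix (Fin n) (Fin n) ℝ) :=
  {X | PrimalFeasible A b X ∧ ∀ X', PrimalFeasible A b X' →
    ((C + ε • Cbar) * X).trace ≤ ((C + ε • Cbar) * X').trace}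

/-- The dual optimal set `D*(ε)`. -/
def DualOpt (C Cbar : Matrix (Fin n) (Fin n) ℝ) (A : Fin m → Matrix (Fin n) (Fin n) ℝ)
    (b : Fin m → ℝ) (ε : ℝ) : Set ((Fin m → ℝ) × Matrix (Fin n) (Fin n) ℝ) :=
  {p | DualFeasible C Cbar A ε p.1 p.2 ∧ ∀ y' S', DualFeasible C Cbar A ε y' S' →
    ∑ i, b i * y' i ≤ ∑ i, b i * p.1 i}

/-- A maximally complementary optimal solution: `X` lies in the relative interior of `P*(ε)`
and `(y, S)` in the relative interior of `D*(ε)`. -/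
def MaxComp (C Cbar : Matrix (Fin n) (Fin n) ℝ) (A : Fin m → Matrix (Fin n) (Fin n) ℝ)
    (b : Fin m → ℝ) (ε : ℝ) (X : Matrix (Fin n) (Fin n) ℝ) (y : Fin m → ℝ)
    (S : Matrix (Fin n) (Fin n) ℝ) : Prop :=
  X ∈ intrinsicInterior ℝ (PrimalOpt C Cbar A b ε) ∧
    (y, S) ∈ intrinsicInterior ℝ (DualOpt C Cbar A b ε)

/-- `π(ε) = π(ε')`: the optimal partitions at `ε` and `ε'` coincide, expressed through
maximally complementary solutions (`B = range X*`, `N = range S*`, `T` being determined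
by `B` and `N`). -/
def SamePartition (C Cbar : Matrix (Fin n) (Fin n) ℝ) (A : Fin m → Matrix (Fin n) (Fin n) ℝ)
    (b : Fin m → ℝ) (ε ε' : ℝ) : Prop :=
  ∃ X y S X' y' S', MaxComp C Cbar A b ε X y S ∧ MaxComp C Cbar A b ε' X' y' S' ∧
    LinearMap.range X.mulVecLin = LinearMap.range X'.mulVecLin ∧
    LinearMap.range S.mulVecLin = LinearMap.range S'.mulVecLin

/-- The standing assumptions: symmetric data, linearly independent constraint matrices and
the interior point condition at `ε = 0`. -/
def StandingAssumptions (C Cbar : Matrix (Fin n) (Fin n) ℝ)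
    (A : Fin m → Matrix (Fin n) (Fin n) ℝ) (b : Fin m → ℝ) : Prop :=
  C.IsSymm ∧ Cbar.IsSymm ∧ (∀ i, (A i).IsSymm) ∧ LinearIndependent ℝ A ∧
    ∃ X y S, PrimalFeasible A b X ∧ X.PosDef ∧ DualFeasible C Cbar A 0 y S ∧ S.PosDef

/-- The invariancy set of `ε̄`. -/
def InvSet (C Cbar : Matrix (Fin n) (Fin n) ℝ) (A : Fin m → Matrix (Fin n) (Fin n) ℝ)
    (b : Fin m → ℝ) (εbar : ℝ) : Set ℝ :=
  {ε | ε ∈ interior (Eset C Cbar A b) ∧ SamePartition C Cbar A b ε εbar}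

/-- `dim B(ε) = dim B(ε')` and `dim N(ε) = dim N(ε')`, expressed through maximally
complementary solutions. -/
def DimsMatch (C Cbar : Matrix (Fin n) (Fin n) ℝ) (A : Fin m → Matrix (Fin n) (Fin n) ℝ)
    (b : Fin m → ℝ) (ε ε' : ℝ) : Prop :=
  ∀ X y S X' y' S', MaxComp C Cbar A b ε X y S → MaxComp C Cbar A b ε' X' y' S' →
    Module.finrank ℝ (LinearMap.range X.mulVecLin) =
        Module.finrank ℝ (LinearMap.range X'.mulVecLin) ∧
      Module.finrank ℝ (LinearMap.range S.mulVecLin) =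
        Module.finrank ℝ (LinearMap.range S'.mulVecLin)

/-- A transition point: a singleton invariancy set such that every neighborhood contains a
parameter at which `dim B` or `dim N` differs. -/
def IsTransitionPoint (C Cbar : Matrix (Fin n) (Fin n) ℝ) (A : Fin m → Matrix (Fin n) (Fin n) ℝ)
    (b : Fin m → ℝ) (εbar : ℝ) : Prop :=
  εbar ∈ interior (Eset C Cbar A b) ∧
    (∀ ε ∈ interior (Eset C Cbar A b), ε ≠ εbar → ¬ SamePartition C Cbar A b ε εbar) ∧
    ∀ ξ : ℝ, 0 < ξ → ∃ ε ∈ Set.Ioo (εbar - ξ) (εbar + ξ) ∩ interior (Eset C Cbar A b),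
      ¬ DimsMatch C Cbar A b ε εbar

/-- Existence of a strictly complementary optimal solution at `ε`. -/
def HasStrictComp (C Cbar : Matrix (Fin n) (Fin n) ℝ) (A : Fin m → Matrix (Fin n) (Fin n) ℝ)
    (b : Fin m → ℝ) (ε : ℝ) : Prop :=
  ∃ X y S, X ∈ PrimalOpt C Cbar A b ε ∧ (y, S) ∈ DualOpt C Cbar A b ε ∧ (X + S).PosDef

/-- Nonsingularity of the Jacobian `J(X, y, S)` of the optimality system, as a linear map on
`S^n × ℝ^m × S^n`: only the trivial symmetric triple is mapped to zero. -/
def JNonsingular (A : Fin m → Matrix (Fin n) (Fin n) ℝ)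
    (X S : Matrix (Fin n) (Fin n) ℝ) : Prop :=
  ∀ (DX DS : Matrix (Fin n) (Fin n) ℝ) (Dy : Fin m → ℝ), DX.IsSymm → DS.IsSymm →
    (∀ i, ((A i) * DX).trace = 0) → ((∑ i, Dy i • A i) + DS = 0) →
    (DX * S + S * DX + X * DS + DS * X = 0) → DX = 0 ∧ Dy = 0 ∧ DS = 0

/-- Primal nondegeneracy of a primal feasible `X`. -/
def PrimalNondeg (A : Fin m → Matrix (Fin n) (Fin n) ℝ)
    (X : Matrix (Fin n) (Fin n) ℝ) : Prop :=
  ∃ (r : ℕ) (M₁ : Matrix (Fin n) (Fin r) ℝ) (M₂ : Matrix (Fin n) (Fin (n - r)) ℝ),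
    M₁ᵀ * M₁ = 1 ∧ M₂ᵀ * M₂ = 1 ∧ M₁ᵀ * M₂ = 0 ∧
    LinearMap.range M₁.mulVecLin = LinearMap.range X.mulVecLin ∧
    LinearIndependent ℝ (fun i =>
      Matrix.fromBlocks (M₁ᵀ * (A i) * M₁) (M₁ᵀ * (A i) * M₂) (M₂ᵀ * (A i) * M₁) 0)

/-- Dual nondegeneracy of a dual feasible `(y, S)` (the condition involves only `S`). -/
def DualNondeg (A : Fin m → Matrix (Fin n) (Fin n) ℝ)
    (S : Matrix (Fin n) (Fin n) ℝ) : Prop :=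
  ∃ (k : ℕ) (N₁ : Matrix (Fin n) (Fin k) ℝ),
    N₁ᵀ * N₁ = 1 ∧ LinearMap.range N₁.mulVecLin = LinearMap.ker S.mulVecLin ∧
    ∀ W : Matrix (Fin k) (Fin k) ℝ, W.IsSymm →
      W ∈ Submodule.span ℝ (Set.range fun i => N₁ᵀ * (A i) * N₁)

/-- A central solution with parameter `μ` for the problems `(P_ε)` and `(D_ε)`. -/
def CentralSol (C Cbar : Matrix (Fin n) (Fin n) ℝ) (A : Fin m → Matrix (Fin n) (Fin n) ℝ)
    (b : Fin m → ℝ) (ε μ : ℝ) (X : Matrix (Fin n) (Fin n) ℝ) (y : Fin m → ℝ)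
    (S : Matrix (Fin n) (Fin n) ℝ) : Prop :=
  PrimalFeasible A b X ∧ DualFeasible C Cbar A ε y S ∧
    X * S = μ • (1 : Matrix (Fin n) (Fin n) ℝ)

/-- The Frobenius norm of a matrix. -/
def frobNorm {α β : Type*} [Fintype α] [Fintype β] (M : Matrix α β ℝ) : ℝ :=
  Real.sqrt (∑ i, ∑ j, (M i j) ^ 2)

/-- The spectral norm (induced 2-norm) of a square matrix. -/
def specNorm {N : ℕ} (M : Matrix (Fin N) (Fin N) ℝ) : ℝ :=
  ‖LinearMap.toContinuousLinearMap (Matrix.toEuclideanLin M)‖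

/-- The smallest eigenvalue of a symmetric matrix, via the Rayleigh quotient. -/
def lamMin {k : ℕ} (M : Matrix (Fin k) (Fin k) ℝ) : ℝ :=
  sInf {r : ℝ | ∃ x : Fin k → ℝ, (∑ i, (x i) ^ 2) = 1 ∧ r = x ⬝ᵥ M.mulVec x}

/-- `θ^μ`: the operator norm of the inverse of the Jacobian `J(X, y, S)` on
`S^n × ℝ^m × S^n`, characterized as the least constant `t ≥ 0` with
`‖(ΔX, Δy, ΔS)‖ ≤ t * ‖J(X,y,S)(ΔX, Δy, ΔS)‖` for all symmetric `ΔX`, `ΔS`. -/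
def thetaMu (A : Fin m → Matrix (Fin n) (Fin n) ℝ)
    (X S : Matrix (Fin n) (Fin n) ℝ) : ℝ :=
  sInf {t : ℝ | 0 ≤ t ∧ ∀ (DX DS : Matrix (Fin n) (Fin n) ℝ) (Dy : Fin m → ℝ),
    DX.IsSymm → DS.IsSymm →
    Real.sqrt (frobNorm DX ^ 2 + (∑ i, (Dy i) ^ 2) + frobNorm DS ^ 2) ≤
      t * Real.sqrt ((∑ i, (((A i) * DX).trace) ^ 2) +
        frobNorm ((∑ i, Dy i • A i) + DS) ^ 2 +
        frobNorm ((1 / 2 : ℝ) • (DX * S + S * DX + X * DS + DS * X)) ^ 2)}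

/-- A nonlinearity interval: a non-singleton open subinterval of `int(E)`, of maximal length,
on which `dim B(·)` and `dim N(·)` are constant while the optimal partition `π(·)` varies. -/
def IsNonlinearityInterval (C Cbar : Matrix (Fin n) (Fin n) ℝ)
    (A : Fin m → Matrix (Fin n) (Fin n) ℝ) (b : Fin m → ℝ) (I : Set ℝ) : Prop :=
  I ⊆ interior (Eset C Cbar A b) ∧ IsOpen I ∧ I.OrdConnected ∧
    (∃ a ∈ I, ∃ c ∈ I, a ≠ c) ∧
    (∀ ε ∈ I, ∀ ε' ∈ I, DimsMatch C Cbar A b ε ε') ∧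
    ¬ (∀ ε ∈ I, ∀ ε' ∈ I, SamePartition C Cbar A b ε ε') ∧
    ∀ I' : Set ℝ, I ⊆ I' → I' ⊆ interior (Eset C Cbar A b) → IsOpen I' → I'.OrdConnected →
      (∀ ε ∈ I', ∀ ε' ∈ I', DimsMatch C Cbar A b ε ε') → I' = I

end

/-! By Weyl's inequalities a perturbation of spectral norm `s` moves every eigenvalue by at most
`s`, so the gap `d` shrinks by at most `2 s`. Let `P = (P₁, P₂)` diagonalize `B = A + Ξ`. Since `A`
is block diagonal in the basis `(Q₁, Q₂)`, the residual block `Q₂ᵀ B Q₁` equals `Q₂ᵀ Ξ Q₁`, and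
compressing `B Q₁` by `P₂ᵀ` yields a Sylvester equation for `P₂ᵀ Q₁` whose coefficients have spectra
at distance at least `d - 2 s`. Hence `(d - 2 s) ‖P₂ᵀ Q₁‖ ≤ ‖Q₂ᵀ Ξ Q₁‖`, and `‖P₂ᵀ Q₁‖` bounds the
distance between the two projections. The same separation, read on Rayleigh quotients, makes
`Q₁ᵀ P₁` invertible, so the range of `P₁` is the graph of a linear map over the range of `Q₁`. -/

open scoped MatrixOrder

variable {ι κ τ ρ : Type*}

section Loewner

theorem smul_one_le_diagonal [DecidableEq ι] {a : ℝ} {v : ι → ℝ} (h : ∀ i, a ≤ v i) :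
    a • (1 : Matrix ι ι ℝ) ≤ diagonal v := by
  rw [Matrix.le_iff, smul_one_eq_diagonal, diagonal_sub]
  exact .diagonal fun i => sub_nonneg.mpr (h i)

theorem diagonal_le_smul_one [DecidableEq ι] {b : ℝ} {v : ι → ℝ} (h : ∀ i, v i ≤ b) :
    diagonal v ≤ b • (1 : Matrix ι ι ℝ) := by
  rw [Matrix.le_iff, smul_one_eq_diagonal, diagonal_sub]
  exact .diagonal fun i => sub_nonneg.mpr (h i)

variable [Fintype ι]

theorem transpose_mul_mul_mono [Finite κ] {M N : Matrix ι ι ℝ} (h : M ≤ N) (S : Matrix ι κ ℝ) :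
    Sᵀ * M * S ≤ Sᵀ * N * S := by
  simpa [Matrix.le_iff, Matrix.mul_sub, Matrix.sub_mul] using
    (Matrix.le_iff.mp h).conjTranspose_mul_mul_same S

theorem trace_mono {M N : Matrix ι ι ℝ} (h : M ≤ N) : M.trace ≤ N.trace := by
  simpa [Matrix.trace_sub] using (Matrix.le_iff.mp h).trace_nonneg

theorem dotProduct_mulVec_mono {M N : Matrix ι ι ℝ} (h : M ≤ N) (x : ι → ℝ) :
    x ⬝ᵥ M *ᵥ x ≤ x ⬝ᵥ N *ᵥ x := by
  simpa [Matrix.sub_mulVec] using (Matrix.le_iff.mp h).dotProduct_mulVec_nonneg x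

theorem exists_posDef_mul_self_mul_eq_one [DecidableEq ι] {M : Matrix ι ι ℝ} (hM : M.PosDef) :
    ∃ R : Matrix ι ι ℝ, R.PosDef ∧ R * R * M = 1 := by
  have hsq : CFC.sqrt M⁻¹ * CFC.sqrt M⁻¹ = M⁻¹ :=
    CFC.sqrt_mul_sqrt_self _ hM.inv.posSemidef.nonneg
  refine ⟨CFC.sqrt M⁻¹, hM.inv.isStrictlyPositive.sqrt.posDef, ?_⟩
  rw [hsq, Matrix.nonsing_inv_mul _ ((Matrix.isUnit_iff_isUnit_det _).mp hM.isUnit)]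

end Loewner

section Norms

variable [Fintype ι] [Fintype κ]

theorem frobNorm_nonneg (M : Matrix ι κ ℝ) : 0 ≤ frobNorm M := Real.sqrt_nonneg _

theorem frobNorm_eq_zero {M : Matrix ι κ ℝ} : frobNorm M = 0 ↔ M = 0 := by
  refine ⟨fun h => ?_, fun h => by simp [h, frobNorm]⟩
  rw [frobNorm, Real.sqrt_eq_zero (by positivity)] at h
  have hentry : ∀ i j, M i j = 0 := by
    simpa [Finset.sum_eq_zero_iff_of_nonneg, Finset.sum_nonneg, sq_nonneg] using h
  exact Matrix.ext hentry

theorem frobNorm_neg (M : Matrix ι κ ℝ) : frobNorm (-M) = frobNorm M := by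
  simp [frobNorm]

theorem frobNorm_transpose (M : Matrix ι κ ℝ) : frobNorm Mᵀ = frobNorm M := by
  unfold frobNorm
  rw [Finset.sum_comm]
  rfl

theorem frobNorm_sq (M : Matrix ι κ ℝ) : frobNorm M ^ 2 = ∑ i, ∑ j, M i j ^ 2 :=
  Real.sq_sqrt (by positivity)

theorem frobNorm_sq_eq_trace (M : Matrix ι κ ℝ) : frobNorm M ^ 2 = (Mᵀ * M).trace := by
  rw [frobNorm_sq, Finset.sum_comm]
  simp [Matrix.trace, Matrix.mul_apply, sq]

theorem trace_transpose_mul_le (M N : Matrix ι κ ℝ) :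
    (Mᵀ * N).trace ≤ frobNorm M * frobNorm N := by
  have h := Real.sum_mul_le_sqrt_mul_sqrt (Finset.univ : Finset (ι × κ))
    (fun p => M p.1 p.2) (fun p => N p.1 p.2)
  simp only [Fintype.sum_prod_type] at h
  rw [Finset.sum_comm] at h
  simpa [Matrix.trace, Matrix.mul_apply, frobNorm] using h

theorem mulVec_dotProduct_self_le (M : Matrix ι κ ℝ) (x : κ → ℝ) :
    (M *ᵥ x) ⬝ᵥ (M *ᵥ x) ≤ frobNorm M ^ 2 * (x ⬝ᵥ x) := by
  rw [frobNorm_sq, Finset.sum_mul]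
  refine Finset.sum_le_sum fun i _ => ?_
  simpa [mulVec, dotProduct, ← sq] using
    Finset.sum_mul_sq_le_sq_mul_sq Finset.univ (fun j => M i j) x

theorem specNorm_le_of_mulVec_dotProduct_self_le {n : ℕ} {M : Matrix (Fin n) (Fin n) ℝ} {c : ℝ}
    (hc : 0 ≤ c) (h : ∀ x, (M *ᵥ x) ⬝ᵥ (M *ᵥ x) ≤ c ^ 2 * (x ⬝ᵥ x)) : specNorm M ≤ c := by
  refine ContinuousLinearMap.opNorm_le_bound _ hc fun x => ?_
  refine le_of_sq_le_sq ?_ (by positivity)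
  simpa [mul_pow, EuclideanSpace.real_norm_sq_eq, dotProduct, ← sq] using h x

theorem specNorm_le_frobNorm {n : ℕ} (M : Matrix (Fin n) (Fin n) ℝ) :
    specNorm M ≤ frobNorm M :=
  specNorm_le_of_mulVec_dotProduct_self_le (frobNorm_nonneg M) (mulVec_dotProduct_self_le M)

theorem le_specNorm_smul_one {n : ℕ} {M : Matrix (Fin n) (Fin n) ℝ} (hM : M.IsSymm) :
    M ≤ specNorm M • (1 : Matrix (Fin n) (Fin n) ℝ) := by
  rw [Matrix.le_iff]
  refine .of_dotProduct_mulVec_nonneg ?_ fun x => ?_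
  · rw [IsHermitian, conjTranspose_eq_transpose_of_trivial]
    exact (isSymm_one.smul _).sub hM
  have h : x ⬝ᵥ M *ᵥ x ≤ specNorm M * (x ⬝ᵥ x) := calc
    x ⬝ᵥ M *ᵥ x = inner ℝ (toEuclideanLin M (.toLp 2 x)) (.toLp 2 x) := by
      simp [EuclideanSpace.inner_eq_star_dotProduct]
    _ ≤ ‖toEuclideanLin M (.toLp 2 x)‖ * ‖WithLp.toLp 2 x‖ := real_inner_le_norm _ _
    _ ≤ specNorm M * ‖WithLp.toLp 2 x‖ * ‖WithLp.toLp 2 x‖ := by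
      gcongr
      exact (toEuclideanLin M).toContinuousLinearMap.le_opNorm _
    _ = specNorm M * (x ⬝ᵥ x) := by
      rw [mul_assoc, ← sq, EuclideanSpace.real_norm_sq_eq]
      simp [dotProduct, sq]
  simpa [sub_mulVec, smul_mulVec] using h

theorem specNorm_neg {n : ℕ} (M : Matrix (Fin n) (Fin n) ℝ) : specNorm (-M) = specNorm M := by
  simp [specNorm]

theorem add_le_add_specNorm_smul_one {n : ℕ} {Xi : Matrix (Fin n) (Fin n) ℝ} (hXi : Xi.IsSymm)
    (A : Matrix (Fin n) (Fin n) ℝ) : A + Xi ≤ A + specNorm Xi • 1 :=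
  add_le_add_right (le_specNorm_smul_one hXi) A

theorem le_add_add_specNorm_smul_one {n : ℕ} {Xi : Matrix (Fin n) (Fin n) ℝ} (hXi : Xi.IsSymm)
    (A : Matrix (Fin n) (Fin n) ℝ) : A ≤ A + Xi + specNorm Xi • 1 := by
  simpa [specNorm_neg] using add_le_add_specNorm_smul_one hXi.neg (A + Xi)

end Norms

theorem range_mulVecLin_mul_of_isUnit [Fintype κ] [DecidableEq κ] (P : Matrix ι κ ℝ)
    {U : Matrix κ κ ℝ} (hU : IsUnit U) :
    LinearMap.range (P * U).mulVecLin = LinearMap.range P.mulVecLin := by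
  rw [mulVecLin_mul]
  exact LinearMap.range_comp_of_range_eq_top _
    (LinearMap.range_eq_top.mpr (mulVec_surjective_iff_isUnit.mpr hU))

section Isometry

variable [Fintype ι] [Fintype κ] [DecidableEq κ]

theorem mulVec_dotProduct_mulVec_self {Q : Matrix ι κ ℝ} (hQ : Qᵀ * Q = 1) (x : κ → ℝ) :
    (Q *ᵥ x) ⬝ᵥ (Q *ᵥ x) = x ⬝ᵥ x := by
  rw [dotProduct_comm, ← dotProduct_transpose_mulVec, mulVec_mulVec, hQ, one_mulVec]

theorem frobNorm_mul_of_transpose_mul_self [Fintype ρ] {Q : Matrix ι κ ℝ} (hQ : Qᵀ * Q = 1)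
    (M : Matrix κ ρ ℝ) : frobNorm (Q * M) = frobNorm M := by
  refine (sq_eq_sq₀ (frobNorm_nonneg _) (frobNorm_nonneg _)).mp ?_
  rw [frobNorm_sq_eq_trace, frobNorm_sq_eq_trace, transpose_mul, Matrix.mul_assoc,
    ← Matrix.mul_assoc Qᵀ, hQ, Matrix.one_mul]

end Isometry

/-- The block matrix `(Q₁, Q₂)` is orthogonal: the columns of `Q₁` and of `Q₂` are orthonormal
bases of two complementary orthogonal subspaces. Every index type is arbitrary, so that no
identification of `κ ⊕ τ` with `ι` is needed. -/
structure IsOrthogonalSplitting [Fintype ι] [Fintype κ] [Fintype τ] [DecidableEq ι]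
    [DecidableEq κ] [DecidableEq τ] (Q₁ : Matrix ι κ ℝ) (Q₂ : Matrix ι τ ℝ) : Prop where
  transpose_mul_self_left : Q₁ᵀ * Q₁ = 1
  transpose_mul_self_right : Q₂ᵀ * Q₂ = 1
  transpose_right_mul_left : Q₂ᵀ * Q₁ = 0
  mul_transpose_add : Q₁ * Q₁ᵀ + Q₂ * Q₂ᵀ = 1

namespace IsOrthogonalSplitting

variable [Fintype ι] [Fintype κ] [Fintype τ] [DecidableEq ι] [DecidableEq κ] [DecidableEq τ]
  {Q₁ P₁ : Matrix ι κ ℝ} {Q₂ P₂ : Matrix ι τ ℝ}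

theorem transpose_left_mul_right (hQ : IsOrthogonalSplitting Q₁ Q₂) : Q₁ᵀ * Q₂ = 0 := by
  simpa [transpose_mul] using congrArg transpose hQ.transpose_right_mul_left

theorem eq_mul_add_mul (hQ : IsOrthogonalSplitting Q₁ Q₂) (M : Matrix ι ρ ℝ) :
    M = Q₁ * (Q₁ᵀ * M) + Q₂ * (Q₂ᵀ * M) := by
  rw [← Matrix.mul_assoc, ← Matrix.mul_assoc, ← Matrix.add_mul, hQ.mul_transpose_add,
    Matrix.one_mul]

theorem frobNorm_sq_add [Fintype ρ] (hQ : IsOrthogonalSplitting Q₁ Q₂) (M : Matrix ι ρ ℝ) :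
    frobNorm (Q₁ᵀ * M) ^ 2 + frobNorm (Q₂ᵀ * M) ^ 2 = frobNorm M ^ 2 := by
  conv_rhs => rw [frobNorm_sq_eq_trace]; enter [1, 2]; rw [hQ.eq_mul_add_mul M]
  simp only [frobNorm_sq_eq_trace, ← trace_add, transpose_mul, transpose_transpose,
    Matrix.mul_assoc, Matrix.mul_add]

theorem frobNorm_transpose_right_mul_le [Fintype ρ] (hQ : IsOrthogonalSplitting Q₁ Q₂)
    (M : Matrix ι ρ ℝ) : frobNorm (Q₂ᵀ * M) ≤ frobNorm M := by
  refine le_of_sq_le_sq ?_ (frobNorm_nonneg M)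
  linarith [hQ.frobNorm_sq_add M, sq_nonneg (frobNorm (Q₁ᵀ * M))]

theorem dotProduct_add (hQ : IsOrthogonalSplitting Q₁ Q₂) (x y : ι → ℝ) :
    (Q₁ᵀ *ᵥ x) ⬝ᵥ (Q₁ᵀ *ᵥ y) + (Q₂ᵀ *ᵥ x) ⬝ᵥ (Q₂ᵀ *ᵥ y) = x ⬝ᵥ y := by
  rw [dotProduct_transpose_mulVec, dotProduct_transpose_mulVec, mulVec_mulVec, mulVec_mulVec,
    ← _root_.dotProduct_add, ← add_mulVec, hQ.mul_transpose_add, one_mulVec, dotProduct_comm]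

theorem frobNorm_transpose_mul_comm (hQ : IsOrthogonalSplitting Q₁ Q₂)
    (hP : IsOrthogonalSplitting P₁ P₂) : frobNorm (Q₂ᵀ * P₁) = frobNorm (P₂ᵀ * Q₁) := by
  have hcomm : frobNorm (P₁ᵀ * Q₁) = frobNorm (Q₁ᵀ * P₁) := by
    rw [← frobNorm_transpose, transpose_mul, transpose_transpose]
  have hsize : frobNorm P₁ ^ 2 = frobNorm Q₁ ^ 2 := by
    rw [frobNorm_sq_eq_trace, frobNorm_sq_eq_trace, hP.transpose_mul_self_left,
      hQ.transpose_mul_self_left]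
  refine (sq_eq_sq₀ (frobNorm_nonneg _) (frobNorm_nonneg _)).mp ?_
  have hQP := hQ.frobNorm_sq_add P₁
  have hPQ := hP.frobNorm_sq_add Q₁
  rw [hcomm] at hPQ
  linarith

/- Both off-diagonal blocks `Q₁ᵀ P₂` and `Q₂ᵀ P₁` have the same Frobenius norm `c`, so the two
halves of the Pythagorean decomposition of `(Q₁ Q₁ᵀ - P₁ P₁ᵀ) x` are at most `c |P₂ᵀ x|` and
`c |P₁ᵀ x|`. -/
theorem specNorm_sub_le {n : ℕ} {Q₁ P₁ : Matrix (Fin n) κ ℝ} {Q₂ P₂ : Matrix (Fin n) τ ℝ}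
    (hQ : IsOrthogonalSplitting Q₁ Q₂) (hP : IsOrthogonalSplitting P₁ P₂) :
    specNorm (Q₁ * Q₁ᵀ - P₁ * P₁ᵀ) ≤ frobNorm (P₂ᵀ * Q₁) := by
  refine specNorm_le_of_mulVec_dotProduct_self_le (frobNorm_nonneg _) fun x => ?_
  have hleft : Q₁ᵀ * (Q₁ * Q₁ᵀ - P₁ * P₁ᵀ) = Q₁ᵀ * P₂ * P₂ᵀ := by
    rw [Matrix.mul_sub, ← Matrix.mul_assoc, hQ.transpose_mul_self_left, Matrix.one_mul,
      sub_eq_iff_eq_add', Matrix.mul_assoc Q₁ᵀ P₂, ← Matrix.mul_add, hP.mul_transpose_add,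
      Matrix.mul_one]
  have hright : Q₂ᵀ * (Q₁ * Q₁ᵀ - P₁ * P₁ᵀ) = -(Q₂ᵀ * P₁ * P₁ᵀ) := by
    rw [Matrix.mul_sub, ← Matrix.mul_assoc, hQ.transpose_right_mul_left, Matrix.zero_mul,
      zero_sub, Matrix.mul_assoc]
  have hleft_norm : frobNorm (Q₁ᵀ * P₂) = frobNorm (P₂ᵀ * Q₁) := by
    rw [← frobNorm_transpose, transpose_mul, transpose_transpose]
  have hright_norm := hQ.frobNorm_transpose_mul_comm hP
  calc ((Q₁ * Q₁ᵀ - P₁ * P₁ᵀ) *ᵥ x) ⬝ᵥ ((Q₁ * Q₁ᵀ - P₁ * P₁ᵀ) *ᵥ x)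
      = ((Q₁ᵀ * P₂) *ᵥ P₂ᵀ *ᵥ x) ⬝ᵥ ((Q₁ᵀ * P₂) *ᵥ P₂ᵀ *ᵥ x) +
          ((Q₂ᵀ * P₁) *ᵥ P₁ᵀ *ᵥ x) ⬝ᵥ ((Q₂ᵀ * P₁) *ᵥ P₁ᵀ *ᵥ x) := by
        rw [← hQ.dotProduct_add]
        simp only [mulVec_mulVec, hleft, hright, neg_mulVec, neg_dotProduct_neg]
    _ ≤ frobNorm (P₂ᵀ * Q₁) ^ 2 * ((P₂ᵀ *ᵥ x) ⬝ᵥ (P₂ᵀ *ᵥ x)) +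
          frobNorm (P₂ᵀ * Q₁) ^ 2 * ((P₁ᵀ *ᵥ x) ⬝ᵥ (P₁ᵀ *ᵥ x)) :=
        add_le_add (hleft_norm ▸ mulVec_dotProduct_self_le _ _)
          (hright_norm ▸ mulVec_dotProduct_self_le _ _)
    _ = frobNorm (P₂ᵀ * Q₁) ^ 2 * (x ⬝ᵥ x) := by
        rw [← mul_add, add_comm, hP.dotProduct_add]

theorem range_eq_of_transpose_mul_eq_zero (hP : IsOrthogonalSplitting P₁ P₂)
    (hQ : Q₁ᵀ * Q₁ = 1) (h : P₂ᵀ * Q₁ = 0) :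
    LinearMap.range Q₁.mulVecLin = LinearMap.range P₁.mulVecLin := by
  have hQP : Q₁ = P₁ * (P₁ᵀ * Q₁) := by
    simpa [h] using hP.eq_mul_add_mul Q₁
  have hinv : (P₁ᵀ * Q₁)ᵀ * (P₁ᵀ * Q₁) = 1 := by
    rw [transpose_mul, transpose_transpose, Matrix.mul_assoc, ← hQP, hQ]
  rw [hQP, range_mulVecLin_mul_of_isUnit P₁ (.of_mul_eq_one_right _ hinv)]

section Graph

theorem transpose_mul_self_add (hQ : IsOrthogonalSplitting Q₁ Q₂) (V : Matrix τ κ ℝ) :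
    (Q₁ + Q₂ * V)ᵀ * (Q₁ + Q₂ * V) = 1 + Vᵀ * V := by
  calc (Q₁ + Q₂ * V)ᵀ * (Q₁ + Q₂ * V)
      = Q₁ᵀ * Q₁ + Q₁ᵀ * Q₂ * V + Vᵀ * (Q₂ᵀ * Q₁) + Vᵀ * (Q₂ᵀ * Q₂) * V := by
        simp only [transpose_add, transpose_mul, Matrix.add_mul, Matrix.mul_add, Matrix.mul_assoc]
        abel
    _ = 1 + Vᵀ * V := by
        simp [hQ.transpose_mul_self_left, hQ.transpose_mul_self_right,
          hQ.transpose_right_mul_left, hQ.transpose_left_mul_right]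

theorem exists_range_add_mul_eq (hQ : IsOrthogonalSplitting Q₁ Q₂) (hU : IsUnit (Q₁ᵀ * P₁)) :
    ∃ V : Matrix τ κ ℝ,
      LinearMap.range (Q₁ + Q₂ * V).mulVecLin = LinearMap.range P₁.mulVecLin := by
  have hinv : Q₁ᵀ * (P₁ * (Q₁ᵀ * P₁)⁻¹) = 1 := by
    rw [← Matrix.mul_assoc, mul_nonsing_inv _ ((isUnit_iff_isUnit_det _).mp hU)]
  have hgraph := hQ.eq_mul_add_mul (P₁ * (Q₁ᵀ * P₁)⁻¹)
  rw [hinv, Matrix.mul_one] at hgraph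
  exact ⟨_, hgraph ▸ range_mulVecLin_mul_of_isUnit P₁ (isUnit_nonsing_inv_iff.mpr hU)⟩

theorem exists_orthonormal_graph_basis (hQ : IsOrthogonalSplitting Q₁ Q₂)
    (hU : IsUnit (Q₁ᵀ * P₁)) :
    ∃ (V : Matrix τ κ ℝ) (R : Matrix κ κ ℝ), R.PosDef ∧ R * R * (1 + Vᵀ * V) = 1 ∧
      ((Q₁ + Q₂ * V) * R)ᵀ * ((Q₁ + Q₂ * V) * R) = 1 ∧
      LinearMap.range ((Q₁ + Q₂ * V) * R).mulVecLin = LinearMap.range P₁.mulVecLin := by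
  obtain ⟨V, hV⟩ := hQ.exists_range_add_mul_eq hU
  have hgram : (1 + Vᵀ * V).PosDef := Matrix.PosDef.one.add_posSemidef <| by
    simpa using posSemidef_conjTranspose_mul_self V
  obtain ⟨R, hR, hRV⟩ := exists_posDef_mul_self_mul_eq_one hgram
  have hRsymm : Rᵀ = R := by simpa using hR.isHermitian.eq
  refine ⟨V, R, hR, hRV, ?_, (range_mulVecLin_mul_of_isUnit _ hR.isUnit).trans hV⟩
  calc ((Q₁ + Q₂ * V) * R)ᵀ * ((Q₁ + Q₂ * V) * R)
      = R * ((Q₁ + Q₂ * V)ᵀ * (Q₁ + Q₂ * V) * R) := by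
        rw [transpose_mul, hRsymm, Matrix.mul_assoc, Matrix.mul_assoc]
    _ = 1 := by
        rw [hQ.transpose_mul_self_add, mul_eq_one_comm, Matrix.mul_assoc, mul_eq_one_comm, hRV]

end Graph

end IsOrthogonalSplitting

section SinTheta

variable [Fintype ι] [Fintype κ] [Fintype τ] [DecidableEq κ] [DecidableEq τ]

theorem sub_mul_frobNorm_le_frobNorm_sylvester {H : Matrix κ κ ℝ} {N : Matrix τ τ ℝ} {a b : ℝ}
    (hH : a • 1 ≤ H) (hN : N ≤ b • 1) (S : Matrix τ κ ℝ) :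
    (a - b) * frobNorm S ≤ frobNorm (S * H - N * S) := by
  have hH_trace : a * frobNorm S ^ 2 ≤ (Sᵀ * (S * H)).trace := by
    have h := trace_mono (transpose_mul_mul_mono hH Sᵀ)
    rwa [transpose_transpose, Matrix.mul_smul, Matrix.mul_one, Matrix.smul_mul, trace_smul,
      smul_eq_mul, trace_mul_comm, ← frobNorm_sq_eq_trace, trace_mul_comm] at h
  have hN_trace : (Sᵀ * (N * S)).trace ≤ b * frobNorm S ^ 2 := by
    have h := trace_mono (transpose_mul_mul_mono hN S)
    rwa [Matrix.mul_smul, Matrix.mul_one, Matrix.smul_mul, trace_smul, smul_eq_mul,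
      ← frobNorm_sq_eq_trace, Matrix.mul_assoc] at h
  have hCS := trace_transpose_mul_le S (S * H - N * S)
  rw [Matrix.mul_sub, trace_sub] at hCS
  rcases (frobNorm_nonneg S).eq_or_lt with hS | hS
  · simpa [← hS] using frobNorm_nonneg (S * H - N * S)
  · refine le_of_mul_le_mul_left ?_ hS
    linarith

variable [DecidableEq ι] {Q₁ P₁ : Matrix ι κ ℝ} {Q₂ P₂ : Matrix ι τ ℝ} {B : Matrix ι ι ℝ}
  {N : Matrix τ τ ℝ} {a b : ℝ}

namespace IsOrthogonalSplitting

/- `S = P₂ᵀ Q₁` solves the Sylvester equation `S H - N S = -P₂ᵀ Q₂ (Q₂ᵀ B Q₁)` with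
`H = Q₁ᵀ B Q₁`. -/
theorem sub_mul_frobNorm_transpose_mul_le (hQ : IsOrthogonalSplitting Q₁ Q₂)
    (hP : IsOrthogonalSplitting P₁ P₂) (hN : P₂ᵀ * B = N * P₂ᵀ) (hNb : N ≤ b • 1)
    (ha : a • 1 ≤ Q₁ᵀ * B * Q₁) :
    (a - b) * frobNorm (P₂ᵀ * Q₁) ≤ frobNorm (Q₂ᵀ * B * Q₁) := by
  have hsylvester : P₂ᵀ * Q₁ * (Q₁ᵀ * B * Q₁) - N * (P₂ᵀ * Q₁) =
      -(P₂ᵀ * (Q₂ * (Q₂ᵀ * B * Q₁))) := by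
    rw [← Matrix.mul_assoc N, ← hN, Matrix.mul_assoc P₂ᵀ B, hQ.eq_mul_add_mul (B * Q₁)]
    simp only [Matrix.mul_add, Matrix.mul_assoc]
    abel
  calc (a - b) * frobNorm (P₂ᵀ * Q₁)
      ≤ frobNorm (P₂ᵀ * Q₁ * (Q₁ᵀ * B * Q₁) - N * (P₂ᵀ * Q₁)) :=
        sub_mul_frobNorm_le_frobNorm_sylvester ha hNb _
    _ = frobNorm (P₂ᵀ * (Q₂ * (Q₂ᵀ * B * Q₁))) := by rw [hsylvester, frobNorm_neg]
    _ ≤ frobNorm (Q₂ * (Q₂ᵀ * B * Q₁)) := hP.frobNorm_transpose_right_mul_le _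
    _ = frobNorm (Q₂ᵀ * B * Q₁) :=
        frobNorm_mul_of_transpose_mul_self hQ.transpose_mul_self_right _

/- If `P₁ᵀ Q₁ x = 0`, then `Q₁ x = P₂ y` has Rayleigh quotient both `≥ a` and `≤ b`. -/
theorem isUnit_transpose_mul (hP : IsOrthogonalSplitting P₁ P₂) (hQ : Q₁ᵀ * Q₁ = 1)
    (hN : P₂ᵀ * B = N * P₂ᵀ) (hNb : N ≤ b • 1) (ha : a • 1 ≤ Q₁ᵀ * B * Q₁) (hab : b < a) :
    IsUnit (Q₁ᵀ * P₁) := by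
  have hker : ∀ x, (P₁ᵀ * Q₁) *ᵥ x = 0 → x = 0 := fun x hx => by
    set y := P₂ᵀ *ᵥ Q₁ *ᵥ x
    have hxP₁ : P₁ᵀ *ᵥ Q₁ *ᵥ x = 0 := by rw [mulVec_mulVec, hx]
    have hnorm : y ⬝ᵥ y = x ⬝ᵥ x := by
      have h := hP.dotProduct_add (Q₁ *ᵥ x) (Q₁ *ᵥ x)
      rwa [hxP₁, zero_dotProduct, zero_add, mulVec_dotProduct_mulVec_self hQ] at h
    have hquad : x ⬝ᵥ (Q₁ᵀ * B * Q₁) *ᵥ x = y ⬝ᵥ N *ᵥ y := by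
      have h := hP.dotProduct_add (Q₁ *ᵥ x) (B *ᵥ Q₁ *ᵥ x)
      rw [hxP₁, zero_dotProduct, zero_add, mulVec_mulVec _ P₂ᵀ B, hN, ← mulVec_mulVec] at h
      rw [Matrix.mul_assoc, ← mulVec_mulVec, dotProduct_transpose_mulVec, dotProduct_comm,
        ← mulVec_mulVec, h]
    have hlow := dotProduct_mulVec_mono ha x
    have hupp := dotProduct_mulVec_mono hNb y
    simp only [smul_mulVec, one_mulVec, dotProduct_smul, smul_eq_mul, hquad, hnorm] at hlow hupp
    have hxx : 0 ≤ x ⬝ᵥ x := by simpa using dotProduct_star_self_nonneg x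
    exact dotProduct_self_eq_zero.mp (by nlinarith)
  have hunit : IsUnit (P₁ᵀ * Q₁) := mulVec_injective_iff_isUnit.mp
    ((injective_iff_map_eq_zero (P₁ᵀ * Q₁).mulVecLin).mpr hker)
  simpa [transpose_mul] using (isUnit_transpose _).mpr hunit

end IsOrthogonalSplitting

end SinTheta

/-- `B` is diagonalized by the orthogonal matrix `P`: the columns of `P` form an orthonormal basis
of eigenvectors of `B`, with the eigenvalues `ν`. No ordering of the eigenvalues is imposed. -/
structure IsOrthogonalDiagonalization [Fintype ι] [DecidableEq ι] (B P : Matrix ι ι ℝ)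
    (ν : ι → ℝ) : Prop where
  transpose_mul_self : Pᵀ * P = 1
  mul_eq : B * P = P * diagonal ν

theorem exists_antitone_isOrthogonalDiagonalization {n : ℕ} {B : Matrix (Fin n) (Fin n) ℝ}
    (hB : B.IsSymm) :
    ∃ (ν : Fin n → ℝ) (P : Matrix (Fin n) (Fin n) ℝ),
      Antitone ν ∧ IsOrthogonalDiagonalization B P ν := by
  have hB' : B.IsHermitian := by rwa [IsHermitian, conjTranspose_eq_transpose_of_trivial]
  let U : Matrix (Fin n) (Fin n) ℝ := hB'.eigenvectorUnitary
  let σ : Equiv.Perm (Fin n) := Tuple.sort fun i => -hB'.eigenvalues i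
  have hU : Uᵀ * U = 1 := by
    simpa [star_eq_conjTranspose] using Unitary.coe_star_mul_self hB'.eigenvectorUnitary
  have hBU : B * U = U * diagonal hB'.eigenvalues := by
    ext i j
    rw [mul_diagonal, mul_comm]
    exact congrFun (hB'.mulVec_eigenvectorBasis j) i
  refine ⟨hB'.eigenvalues ∘ σ, U.submatrix id σ, fun i j hij => ?_, ?_, ?_⟩
  · exact neg_le_neg_iff.mp (Tuple.monotone_sort (fun i => -hB'.eigenvalues i) hij)
  · rw [transpose_submatrix, ← submatrix_mul _ _ σ id σ Function.bijective_id, hU,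
      submatrix_one_equiv]
  · ext i j
    have h := congrFun₂ hBU i (σ j)
    rw [mul_diagonal] at h ⊢
    exact h

theorem exists_ne_zero_mulVec_eq_zero_of_card_lt {F : Type*} [Field F] [Fintype κ] [Fintype ι]
    (h : Fintype.card κ < Fintype.card ι) (M : Matrix κ ι F) : ∃ x ≠ 0, M *ᵥ x = 0 := by
  have hker : LinearMap.ker M.mulVecLin ≠ ⊥ :=
    LinearMap.ker_ne_bot_of_finrank_lt (by simpa using h)
  obtain ⟨x, hx, hx0⟩ := Submodule.exists_mem_ne_zero_of_ne_bot hker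
  exact ⟨x, hx0, hx⟩

/- Only `card ι - 1` linear conditions are imposed on `x`. -/
theorem exists_ne_zero_mulVec_apply_eq_zero_of_lt_of_gt {F : Type*} [Field F] [Fintype ι]
    [LinearOrder ι] (M N : Matrix ι ι F) (i : ι) :
    ∃ x ≠ 0, (∀ j, i < j → (M *ᵥ x) j = 0) ∧ ∀ j, j < i → (N *ᵥ x) j = 0 := by
  let K : Matrix {j // j ≠ i} ι F := .of fun j => if i < j then M j else N j
  obtain ⟨x, hx0, hx⟩ := exists_ne_zero_mulVec_eq_zero_of_card_lt
    (Fintype.card_subtype_lt (x := i) (by simp)) K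
  refine ⟨x, hx0, fun j hj => ?_, fun j hj => ?_⟩
  · simpa [K, mulVec, hj] using congrFun hx ⟨j, hj.ne'⟩
  · simpa [K, mulVec, hj.not_gt] using congrFun hx ⟨j, hj.ne⟩

namespace IsOrthogonalDiagonalization

section Basic

variable [Fintype ι] [DecidableEq ι] {B P : Matrix ι ι ℝ} {ν : ι → ℝ}

theorem mul_transpose_self (hP : IsOrthogonalDiagonalization B P ν) : P * Pᵀ = 1 :=
  mul_eq_one_comm.mp hP.transpose_mul_self

theorem transpose_mul_eq (hP : IsOrthogonalDiagonalization B P ν) :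
    Pᵀ * B = diagonal ν * Pᵀ := by
  calc Pᵀ * B = Pᵀ * (B * P) * Pᵀ := by
        rw [Matrix.mul_assoc, Matrix.mul_assoc, hP.mul_transpose_self, Matrix.mul_one]
    _ = diagonal ν * Pᵀ := by
        rw [hP.mul_eq, ← Matrix.mul_assoc, hP.transpose_mul_self, Matrix.one_mul]

theorem isSymm (hP : IsOrthogonalDiagonalization B P ν) : B.IsSymm := by
  have hB : B = P * diagonal ν * Pᵀ := by
    rw [← hP.mul_eq, Matrix.mul_assoc, hP.mul_transpose_self, Matrix.mul_one]
  rw [hB, IsSymm, transpose_mul, transpose_mul, transpose_transpose, diagonal_transpose,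
    Matrix.mul_assoc]

theorem dotProduct_mulVec_eq_sum (hP : IsOrthogonalDiagonalization B P ν) (x : ι → ℝ) :
    x ⬝ᵥ B *ᵥ x = ∑ i, ν i * (Pᵀ *ᵥ x) i ^ 2 := by
  calc x ⬝ᵥ B *ᵥ x = (Pᵀ *ᵥ x) ⬝ᵥ (Pᵀ *ᵥ B *ᵥ x) := by
        rw [dotProduct_transpose_mulVec, mulVec_mulVec, hP.mul_transpose_self, one_mulVec,
          dotProduct_comm]
    _ = ∑ i, ν i * (Pᵀ *ᵥ x) i ^ 2 := by
        rw [mulVec_mulVec, hP.transpose_mul_eq, ← mulVec_mulVec]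
        exact Finset.sum_congr rfl fun i _ => by rw [mulVec_diagonal]; ring

theorem dotProduct_self_eq_sum (hP : IsOrthogonalDiagonalization B P ν) (x : ι → ℝ) :
    x ⬝ᵥ x = ∑ i, (Pᵀ *ᵥ x) i ^ 2 := by
  have hPt : Pᵀᵀ * Pᵀ = 1 := by rw [transpose_transpose, hP.mul_transpose_self]
  rw [← mulVec_dotProduct_mulVec_self hPt]
  simp only [dotProduct, sq]

end Basic

section Weyl

variable [Fintype ι] [LinearOrder ι] {A B P P' Q : Matrix ι ι ℝ} {ν ν' lam : ι → ℝ}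

theorem mul_dotProduct_self_le (hP : IsOrthogonalDiagonalization B P ν) (hν : Antitone ν) {i : ι}
    {x : ι → ℝ} (hx : ∀ j, i < j → (Pᵀ *ᵥ x) j = 0) : ν i * (x ⬝ᵥ x) ≤ x ⬝ᵥ B *ᵥ x := by
  rw [hP.dotProduct_mulVec_eq_sum, hP.dotProduct_self_eq_sum, Finset.mul_sum]
  refine Finset.sum_le_sum fun j _ => ?_
  rcases lt_or_ge i j with hij | hji
  · simp [hx j hij]
  · exact mul_le_mul_of_nonneg_right (hν hji) (sq_nonneg _)

theorem le_mul_dotProduct_self (hP : IsOrthogonalDiagonalization B P ν) (hν : Antitone ν) {i : ι}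
    {x : ι → ℝ} (hx : ∀ j, j < i → (Pᵀ *ᵥ x) j = 0) : x ⬝ᵥ B *ᵥ x ≤ ν i * (x ⬝ᵥ x) := by
  rw [hP.dotProduct_mulVec_eq_sum, hP.dotProduct_self_eq_sum, Finset.mul_sum]
  refine Finset.sum_le_sum fun j _ => ?_
  rcases lt_or_ge j i with hji | hij
  · simp [hx j hji]
  · exact mul_le_mul_of_nonneg_right (hν hij) (sq_nonneg _)

theorem eigenvalue_le_add (hA : IsOrthogonalDiagonalization A Q lam)
    (hB : IsOrthogonalDiagonalization B P ν) (hlam : Antitone lam) (hν : Antitone ν) {c : ℝ}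
    (hBA : B ≤ A + c • 1) (i : ι) : ν i ≤ lam i + c := by
  obtain ⟨x, hx0, hxP, hxQ⟩ := exists_ne_zero_mulVec_apply_eq_zero_of_lt_of_gt Pᵀ Qᵀ i
  have hpos : 0 < x ⬝ᵥ x := by simpa using dotProduct_star_self_pos_iff.mpr hx0
  refine le_of_mul_le_mul_right ?_ hpos
  calc ν i * (x ⬝ᵥ x) ≤ x ⬝ᵥ B *ᵥ x := hB.mul_dotProduct_self_le hν hxP
    _ ≤ x ⬝ᵥ (A + c • 1) *ᵥ x := dotProduct_mulVec_mono hBA x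
    _ = x ⬝ᵥ A *ᵥ x + c * (x ⬝ᵥ x) := by
        rw [add_mulVec, dotProduct_add, smul_mulVec, one_mulVec, dotProduct_smul, smul_eq_mul]
    _ ≤ (lam i + c) * (x ⬝ᵥ x) := by
        rw [add_mul]
        gcongr
        exact hA.le_mul_dotProduct_self hlam hxQ

theorem eigenvalues_unique (hP : IsOrthogonalDiagonalization B P ν)
    (hP' : IsOrthogonalDiagonalization B P' ν') (hν : Antitone ν) (hν' : Antitone ν') :
    ν' = ν := by
  have hB : B ≤ B + (0 : ℝ) • 1 := by simp
  refine funext fun i => le_antisymm ?_ ?_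
  · simpa using hP.eigenvalue_le_add hP' hν hν' hB i
  · simpa using hP'.eigenvalue_le_add hP hν' hν hB i

end Weyl

section Blocks

variable [Fintype ι] [DecidableEq ι] {A B P P' Q Xi : Matrix ι ι ℝ} {ν lam : ι → ℝ} {a b s : ℝ}
  {f : κ → ι} {g : τ → ι}

theorem submatrix_transpose_mul [Fintype κ] [DecidableEq κ]
    (hP : IsOrthogonalDiagonalization B P ν) (f : κ → ι) :
    (P.submatrix id f)ᵀ * B = diagonal (ν ∘ f) * (P.submatrix id f)ᵀ := by
  ext i j
  have h := congrFun₂ hP.transpose_mul_eq (f i) j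
  rw [diagonal_mul] at h ⊢
  exact h

theorem submatrix_transpose_mul_self [DecidableEq κ] (hP : IsOrthogonalDiagonalization B P ν)
    (hf : f.Injective) : (P.submatrix id f)ᵀ * P.submatrix id f = 1 := by
  rw [transpose_submatrix, ← submatrix_mul _ _ f id f Function.bijective_id,
    hP.transpose_mul_self, submatrix_one f hf]

theorem isOrthogonalSplitting [Fintype κ] [Fintype τ] [DecidableEq κ] [DecidableEq τ]
    (hP : IsOrthogonalDiagonalization B P ν) (hfg : Function.Bijective (Sum.elim f g)) :
    IsOrthogonalSplitting (P.submatrix id f) (P.submatrix id g) where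
  transpose_mul_self_left := hP.submatrix_transpose_mul_self (hfg.injective.comp Sum.inl_injective)
  transpose_mul_self_right :=
    hP.submatrix_transpose_mul_self (hfg.injective.comp Sum.inr_injective)
  transpose_right_mul_left := by
    rw [transpose_submatrix, ← submatrix_mul _ _ g id f Function.bijective_id,
      hP.transpose_mul_self]
    ext i j
    exact one_apply_ne fun h => Sum.inr_ne_inl (hfg.injective h)
  mul_transpose_add := by
    rw [← hP.mul_transpose_self]
    ext i j
    simp only [Matrix.add_apply, Matrix.mul_apply, transpose_apply, submatrix_apply, id]
    rw [← hfg.sum_comp fun l => P i l * P j l, Fintype.sum_sum_type]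
    rfl

theorem transpose_mul_mul_eq_submatrix (hA : IsOrthogonalDiagonalization A Q lam) (f : κ → ι)
    (g : τ → ι) :
    (Q.submatrix id g)ᵀ * A * Q.submatrix id f = (diagonal lam).submatrix g f := by
  calc (Q.submatrix id g)ᵀ * A * Q.submatrix id f = (Qᵀ * A * Q).submatrix g f := rfl
    _ = (diagonal lam).submatrix g f := by
        rw [Matrix.mul_assoc, hA.mul_eq, ← Matrix.mul_assoc, hA.transpose_mul_self, Matrix.one_mul]

theorem transpose_mul_mul_eq_zero (hA : IsOrthogonalDiagonalization A Q lam)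
    (hfg : (Sum.elim f g).Injective) : (Q.submatrix id g)ᵀ * A * Q.submatrix id f = 0 := by
  rw [hA.transpose_mul_mul_eq_submatrix]
  ext i j
  exact diagonal_apply_ne _ fun h => Sum.inr_ne_inl (hfg h)

theorem frobNorm_transpose_mul_add_mul [Fintype κ] [Fintype τ]
    (hA : IsOrthogonalDiagonalization A Q lam) (hfg : (Sum.elim f g).Injective) (hXi : Xi.IsSymm) :
    frobNorm ((Q.submatrix id g)ᵀ * (A + Xi) * Q.submatrix id f) =
      frobNorm ((Q.submatrix id f)ᵀ * Xi * Q.submatrix id g) := by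
  rw [Matrix.mul_add, Matrix.add_mul, hA.transpose_mul_mul_eq_zero hfg, zero_add,
    ← frobNorm_transpose, transpose_mul, transpose_mul, transpose_transpose, hXi.eq,
    Matrix.mul_assoc]

theorem sub_smul_one_le_transpose_mul_mul [Finite κ] [DecidableEq κ]
    (hA : IsOrthogonalDiagonalization A Q lam) (hf : f.Injective) (ha : ∀ i, a ≤ lam (f i))
    (hAB : A ≤ B + s • 1) : (a - s) • 1 ≤ (Q.submatrix id f)ᵀ * B * Q.submatrix id f := by
  have hcomp := transpose_mul_mul_mono hAB (Q.submatrix id f)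
  rw [hA.transpose_mul_mul_eq_submatrix, submatrix_diagonal _ _ hf, Matrix.mul_add,
    Matrix.add_mul, Matrix.mul_smul, Matrix.mul_one, Matrix.smul_mul,
    hA.submatrix_transpose_mul_self hf] at hcomp
  rw [sub_smul, sub_le_iff_le_add]
  exact (smul_one_le_diagonal ha).trans hcomp

theorem sub_mul_frobNorm_transpose_mul_le [Fintype κ] [Fintype τ]
    (hA : IsOrthogonalDiagonalization A Q lam) (hB : IsOrthogonalDiagonalization B P ν)
    (hfg : Function.Bijective (Sum.elim f g)) (hAB : A ≤ B + s • 1) (ha : ∀ i, a ≤ lam (f i))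
    (hb : ∀ j, ν (g j) ≤ b) :
    (a - s - b) * frobNorm ((P.submatrix id g)ᵀ * Q.submatrix id f) ≤
      frobNorm ((Q.submatrix id g)ᵀ * B * Q.submatrix id f) := by
  classical
  exact (hA.isOrthogonalSplitting hfg).sub_mul_frobNorm_transpose_mul_le
    (hB.isOrthogonalSplitting hfg) (hB.submatrix_transpose_mul g) (diagonal_le_smul_one hb)
    (hA.sub_smul_one_le_transpose_mul_mul (hfg.injective.comp Sum.inl_injective) ha hAB)

theorem isUnit_transpose_mul [Fintype κ] [DecidableEq κ] [Finite τ]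
    (hA : IsOrthogonalDiagonalization A Q lam) (hB : IsOrthogonalDiagonalization B P ν)
    (hfg : Function.Bijective (Sum.elim f g)) (hAB : A ≤ B + s • 1) (ha : ∀ i, a ≤ lam (f i))
    (hb : ∀ j, ν (g j) ≤ b) (hab : b < a - s) :
    IsUnit ((Q.submatrix id f)ᵀ * P.submatrix id f) := by
  classical
  cases nonempty_fintype τ
  have hf : f.Injective := hfg.injective.comp Sum.inl_injective
  exact (hB.isOrthogonalSplitting hfg).isUnit_transpose_mul (hA.submatrix_transpose_mul_self hf)
    (hB.submatrix_transpose_mul g) (diagonal_le_smul_one hb)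
    (hA.sub_smul_one_le_transpose_mul_mul hf ha hAB) hab

theorem range_submatrix_unique [Fintype κ] [Finite τ] (hP : IsOrthogonalDiagonalization B P ν)
    (hP' : IsOrthogonalDiagonalization B P' ν) (hfg : Function.Bijective (Sum.elim f g))
    (hab : b < a) (ha : ∀ i, a ≤ ν (f i)) (hb : ∀ j, ν (g j) ≤ b) :
    LinearMap.range (P'.submatrix id f).mulVecLin =
      LinearMap.range (P.submatrix id f).mulVecLin := by
  classical
  cases nonempty_fintype τ
  have hbound := hP'.sub_mul_frobNorm_transpose_mul_le hP hfg (s := 0) (by simp) ha hb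
  rw [hP'.transpose_mul_mul_eq_zero hfg.injective, frobNorm_eq_zero.mpr rfl, sub_zero] at hbound
  refine (hP.isOrthogonalSplitting hfg).range_eq_of_transpose_mul_eq_zero
    (hP'.isOrthogonalSplitting hfg).transpose_mul_self_left (frobNorm_eq_zero.mp ?_)
  exact le_antisymm (nonpos_of_mul_nonpos_right hbound (sub_pos.mpr hab)) (frobNorm_nonneg _)

theorem specNorm_sub_le_div [Fintype κ] [Fintype τ] {n : ℕ} {A Xi P Q : Matrix (Fin n) (Fin n) ℝ}
    {ν lam : Fin n → ℝ} {f : κ → Fin n} {g : τ → Fin n} (hA : IsOrthogonalDiagonalization A Q lam)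
    (hB : IsOrthogonalDiagonalization (A + Xi) P ν) (hfg : Function.Bijective (Sum.elim f g))
    (hXi : Xi.IsSymm) (hAB : A ≤ A + Xi + s • 1) (ha : ∀ i, a ≤ lam (f i))
    (hb : ∀ j, ν (g j) ≤ b) (hab : b < a - s) :
    specNorm (Q.submatrix id f * (Q.submatrix id f)ᵀ - P.submatrix id f * (P.submatrix id f)ᵀ) ≤
      frobNorm ((Q.submatrix id f)ᵀ * Xi * Q.submatrix id g) / (a - s - b) := by
  classical
  refine ((hA.isOrthogonalSplitting hfg).specNorm_sub_le (hB.isOrthogonalSplitting hfg)).trans ?_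
  rw [le_div_iff₀' (sub_pos.mpr hab), ← hA.frobNorm_transpose_mul_add_mul hfg.injective hXi]
  exact hA.sub_mul_frobNorm_transpose_mul_le hB hfg hAB ha hb

end Blocks

end IsOrthogonalDiagonalization

section Fin

variable {n k : ℕ} {ν : Fin n → ℝ}

theorem bijective_sumElim_castLE_natAdd (hk : k ≤ n) :
    Function.Bijective (Sum.elim (Fin.castLE hk)
      fun j : Fin (n - k) => Fin.cast (Nat.add_sub_of_le hk) (Fin.natAdd k j)) := by
  have h : ⇑(finSumFinEquiv.trans (finCongr (Nat.add_sub_of_le hk))) = Sum.elim (Fin.castLE hk)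
      fun j : Fin (n - k) => Fin.cast (Nat.add_sub_of_le hk) (Fin.natAdd k j) := by
    ext (i | j) <;> rfl
  exact h ▸ Equiv.bijective _

theorem le_apply_castLE_of_antitone (hν : Antitone ν) (hk : k < n) (i : Fin k) :
    ν ⟨k - 1, by omega⟩ ≤ ν (Fin.castLE hk.le i) :=
  hν <| Fin.le_def.mpr <| Nat.le_sub_one_of_lt i.2

theorem apply_natAdd_le_of_antitone (hν : Antitone ν) (hk : k < n) (j : Fin (n - k)) :
    ν (Fin.cast (Nat.add_sub_of_le hk.le) (Fin.natAdd k j)) ≤ ν ⟨k, hk⟩ :=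
  hν <| Fin.le_def.mpr <| Nat.le_add_right k j

end Fin

theorem div_sub_two_mul_specNorm_le {n : ℕ} {Xi : Matrix (Fin n) (Fin n) ℝ} {c d : ℝ}
    (hc : 0 ≤ c) (hd : 0 < d) (hXi : frobNorm Xi ≤ d / 5) :
    c / (d - 2 * specNorm Xi) ≤ 4 * c / d := by
  have hs := specNorm_le_frobNorm Xi
  rw [div_le_div_iff₀ (by linarith) hd]
  nlinarith [mul_nonneg hc (show 0 ≤ 3 * d - 8 * specNorm Xi by linarith)]

theorem stmt10_general {n : ℕ} (A Xi : Matrix (Fin n) (Fin n) ℝ)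
    (hXi : Xi.IsSymm) (k : ℕ) (hk : k < n)
    (lam : Fin n → ℝ) (hlam : Antitone lam)
    (Q : Matrix (Fin n) (Fin n) ℝ) (hQ : Qᵀ * Q = 1)
    (hAQ : A * Q = Q * Matrix.diagonal lam)
    (d : ℝ) (hd : d = lam ⟨k - 1, by omega⟩ - lam ⟨k, hk⟩)
    (hgap : 2 * specNorm Xi < d) :
    ∃ (ν : Fin n → ℝ) (P : Matrix (Fin n) (Fin n) ℝ),
      Antitone ν ∧ Pᵀ * P = 1 ∧ (A + Xi) * P = P * Matrix.diagonal ν ∧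
      ν ⟨k, hk⟩ < ν ⟨k - 1, by omega⟩ ∧
      (∀ (ν' : Fin n → ℝ) (P' : Matrix (Fin n) (Fin n) ℝ), Antitone ν' → P'ᵀ * P' = 1 →
        (A + Xi) * P' = P' * Matrix.diagonal ν' →
        LinearMap.range (P'.submatrix id (Fin.castLE hk.le)).mulVecLin =
          LinearMap.range (P.submatrix id (Fin.castLE hk.le)).mulVecLin) ∧
      ∃ (V : Matrix (Fin (n - k)) (Fin k) ℝ) (R : Matrix (Fin k) (Fin k) ℝ),
        R.PosDef ∧
        R * R * (1 + Vᵀ * V) = 1 ∧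
        (let Q₁ := Q.submatrix id (Fin.castLE hk.le);
         let Q₂ := Q.submatrix id (fun j : Fin (n - k) =>
           Fin.cast (Nat.add_sub_of_le hk.le) (Fin.natAdd k j));
         let P₁ := P.submatrix id (Fin.castLE hk.le);
         let G := (Q₁ + Q₂ * V) * R;
         Gᵀ * G = 1 ∧ LinearMap.range G.mulVecLin = LinearMap.range P₁.mulVecLin ∧
           specNorm (Q₁ * Q₁ᵀ - P₁ * P₁ᵀ) ≤
             frobNorm (Q₁ᵀ * Xi * Q₂) / (d - 2 * specNorm Xi)) := by
  have hA : IsOrthogonalDiagonalization A Q lam := ⟨hQ, hAQ⟩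
  obtain ⟨ν, P, hν, hB⟩ := exists_antitone_isOrthogonalDiagonalization (hA.isSymm.add hXi)
  set s := specNorm Xi
  have hAB : A ≤ A + Xi + s • 1 := le_add_add_specNorm_smul_one hXi A
  have hBA : A + Xi ≤ A + s • 1 := add_le_add_specNorm_smul_one hXi A
  have hweyl_low := hB.eigenvalue_le_add hA hν hlam hAB ⟨k - 1, by omega⟩
  have hweyl_upp := hA.eigenvalue_le_add hB hlam hν hBA ⟨k, hk⟩
  have hfg := bijective_sumElim_castLE_natAdd hk.le
  have ha := le_apply_castLE_of_antitone hlam hk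
  have hb := fun j => (apply_natAdd_le_of_antitone hν hk j).trans hweyl_upp
  have hsep : lam ⟨k, hk⟩ + s < lam ⟨k - 1, by omega⟩ - s := by linarith
  have hνgap : ν ⟨k, hk⟩ < ν ⟨k - 1, by omega⟩ := by linarith
  refine ⟨ν, P, hν, hB.transpose_mul_self, hB.mul_eq, hνgap, fun ν' P' hν' hP' hBP' => ?_, ?_⟩
  · obtain rfl := hB.eigenvalues_unique ⟨hP', hBP'⟩ hν hν'
    exact hB.range_submatrix_unique ⟨hP', hBP'⟩ hfg hνgap (le_apply_castLE_of_antitone hν hk)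
      (apply_natAdd_le_of_antitone hν hk)
  · have hunit := hA.isUnit_transpose_mul hB hfg hAB ha hb hsep
    obtain ⟨V, R, hR, hRV, hG, hrange⟩ :=
      (hA.isOrthogonalSplitting hfg).exists_orthonormal_graph_basis hunit
    refine ⟨V, R, hR, hRV, hG, hrange, ?_⟩
    convert hA.specNorm_sub_le_div hB hfg hXi hAB ha hb hsep using 2
    linarith

/-- perturbation of the invariant subspace spanned by the eigenvectors of the
`k` largest eigenvalues of a symmetric matrix (Stewart / Golub–Van Loan). -/
theorem stmt10 {n : ℕ} (A Xi : Matrix (Fin n) (Fin n) ℝ)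
    (hA : A.IsSymm) (hXi : Xi.IsSymm)
    (k : ℕ) (hk1 : 1 ≤ k) (hk2 : k < n)
    (lam : Fin n → ℝ) (hlam : Antitone lam)
    (Q : Matrix (Fin n) (Fin n) ℝ) (hQ : Qᵀ * Q = 1)
    (hAQ : A * Q = Q * Matrix.diagonal lam)
    (d : ℝ) (hd : d = lam ⟨k - 1, by omega⟩ - lam ⟨k, hk2⟩) (hdpos : 0 < d)
    (hXismall : frobNorm Xi ≤ d / 5) :
    ∃ (ν : Fin n → ℝ) (P : Matrix (Fin n) (Fin n) ℝ),
      Antitone ν ∧ Pᵀ * P = 1 ∧ (A + Xi) * P = P * Matrix.diagonal ν ∧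
      -- the gap persists: `λ_[k](A+Ξ) > λ_[k+1](A+Ξ)`
      ν ⟨k, hk2⟩ < ν ⟨k - 1, by omega⟩ ∧
      -- the invariant subspace `W` spanned by the eigenvectors of the `k` largest
      -- eigenvalues of `A + Ξ` is well defined
      (∀ (ν' : Fin n → ℝ) (P' : Matrix (Fin n) (Fin n) ℝ), Antitone ν' → P'ᵀ * P' = 1 →
        (A + Xi) * P' = P' * Matrix.diagonal ν' →
        LinearMap.range (P'.submatrix id (Fin.castLE hk2.le)).mulVecLin =
          LinearMap.range (P.submatrix id (Fin.castLE hk2.le)).mulVecLin) ∧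
      ∃ (V : Matrix (Fin (n - k)) (Fin k) ℝ) (R : Matrix (Fin k) (Fin k) ℝ),
        R.PosDef ∧
        R * R * (1 + Vᵀ * V) = 1 ∧
        (let Q₁ := Q.submatrix id (Fin.castLE hk2.le);
         let Q₂ := Q.submatrix id (fun j : Fin (n - k) =>
           (⟨k + (j : ℕ), by have := j.2; omega⟩ : Fin n));
         let P₁ := P.submatrix id (Fin.castLE hk2.le);
         let G := (Q₁ + Q₂ * V) * R;
         Gᵀ * G = 1 ∧ LinearMap.range G.mulVecLin = LinearMap.range P₁.mulVecLin ∧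
           specNorm (Q₁ * Q₁ᵀ - P₁ * P₁ᵀ) ≤ 4 * frobNorm (Q₁ᵀ * Xi * Q₂) / d) := by
  have hgap : 2 * specNorm Xi < d := by linarith [specNorm_le_frobNorm Xi]
  obtain ⟨ν, P, hν, hP, hBP, hνgap, hunique, V, R, hR, hRV, hG, hrange, hdist⟩ :=
    stmt10_general A Xi hXi k hk2 lam hlam Q hQ hAQ d hd hgap
  exact ⟨ν, P, hν, hP, hBP, hνgap, hunique, V, R, hR, hRV, hG, hrange,
    hdist.trans (div_sub_two_mul_specNorm_le (frobNorm_nonneg _) hdpos hXismall)⟩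
end

section
/- If |ε| < min{ δ^μ / (2 θ^μ ‖C̄‖), 1 / (2 (θ^μ)² ‖C̄‖) }, then there exists a central solution (X^μ(ε), y^μ(ε), S^μ(ε)) of the perturbed problems (P_ε) and (D_ε) with the same parameter μ such that ‖X^μ(ε) − X^μ‖ ≤ (1 − sqrt(1 − 2|ε| (θ^μ)² ‖C̄‖)) / θ^μ and ‖S^μ(ε) − S^μ‖ ≤ (1 − sqrt(1 − 2|ε| (θ^μ)² ‖C̄‖)) / θ^μ. -/
open Matrix Set

/-!
With the complementarity equation symmetrized to `X S + S X = 2 μ I`, a change `D` of the dual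
right-hand side asks for a solution of `J z + Q z = (0, 0, D)`, where `Q` is quadratic with constant
`1` in the Frobenius norm. Kantorovich's contraction argument solves this for `‖D‖ ≤ |ε| ‖C̄‖`, with
`z` depending continuously on `D`. A singular symmetric `X` cannot satisfy `X S + S X = 2 μ I`,
since the left-hand side vanishes on `ker X` as a quadratic form; hence positive definiteness of `X`
propagates from `D = 0` over the connected ball, and for `X ≻ 0` uniqueness in the Lyapunov equation
turns `X S + S X = 2 μ I` back into `X S = μ I`.
-/

section Kantorovich

/-- The smaller root `r` of `θ (η + L r² / 2) = r`: the radius of the ball in which Kantorovich's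
argument solves `G x + Q x = g` when `‖G⁻¹‖ ≤ θ`, `‖g‖ ≤ η` and `Q` is quadratic with constant `L`.
The roots are real when `2 L θ² η ≤ 1`. -/
noncomputable def kantorovichRadius (L θ η : ℝ) : ℝ :=
  (1 - √(1 - 2 * L * θ ^ 2 * η)) / (L * θ)

variable {L θ η : ℝ}

theorem kantorovichRadius_nonneg (hL : 0 < L) (hθ : 0 < θ) (hη : 0 ≤ η) :
    0 ≤ kantorovichRadius L θ η := by
  have h : 0 ≤ 2 * L * θ ^ 2 * η := by positivity
  refine div_nonneg (sub_nonneg.2 (Real.sqrt_le_one.2 ?_)) (mul_pos hL hθ).le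
  linarith

theorem mul_kantorovichRadius (hL : 0 < L) (hθ : 0 < θ) :
    L * θ * kantorovichRadius L θ η = 1 - √(1 - 2 * L * θ ^ 2 * η) :=
  mul_div_cancel₀ _ (mul_pos hL hθ).ne'

theorem mul_kantorovichRadius_lt_one (hL : 0 < L) (hθ : 0 < θ) (hη : 2 * L * θ ^ 2 * η < 1) :
    L * θ * kantorovichRadius L θ η < 1 := by
  rw [mul_kantorovichRadius hL hθ]
  linarith [Real.sqrt_pos.2 (sub_pos.2 hη)]

theorem mul_add_sq_kantorovichRadius (hL : 0 < L) (hθ : 0 < θ) (hη : 2 * L * θ ^ 2 * η < 1) :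
    θ * (η + L * kantorovichRadius L θ η ^ 2 / 2) = kantorovichRadius L θ η := by
  have hroot : (1 - L * θ * kantorovichRadius L θ η) ^ 2 = 1 - 2 * L * θ ^ 2 * η := by
    rw [mul_kantorovichRadius hL hθ, sub_sub_cancel, Real.sq_sqrt (sub_pos.2 hη).le]
  refine mul_left_cancel₀ (mul_pos hL hθ).ne' ?_
  linear_combination hroot / 2

variable {E F : Type*} [NormedAddCommGroup E] [NormedAddCommGroup F]

theorem norm_sub_le_mul_norm_sub_of_norm_le {Q : E → F} {r : ℝ} (hL : 0 < L)
    (hQ : ∀ x y, ‖Q x - Q y‖ ≤ L / 2 * (‖x‖ + ‖y‖) * ‖x - y‖) {x y : E} (hx : ‖x‖ ≤ r)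
    (hy : ‖y‖ ≤ r) : ‖Q x - Q y‖ ≤ L * r * ‖x - y‖ :=
  calc ‖Q x - Q y‖ ≤ L / 2 * (‖x‖ + ‖y‖) * ‖x - y‖ := hQ x y
    _ ≤ L / 2 * (r + r) * ‖x - y‖ := by gcongr
    _ = L * r * ‖x - y‖ := by ring

variable [NormedSpace ℝ E] [NormedSpace ℝ F] {G : E ≃ₗ[ℝ] F} {Q : E → F}

theorem mul_norm_sub_le_norm_add_quadratic {r : ℝ} (hL : 0 < L) (hθ : 0 < θ)
    (hG : ∀ x, ‖x‖ ≤ θ * ‖G x‖)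
    (hQ : ∀ x y, ‖Q x - Q y‖ ≤ L / 2 * (‖x‖ + ‖y‖) * ‖x - y‖) {x y : E} (hx : ‖x‖ ≤ r)
    (hy : ‖y‖ ≤ r) : (1 - L * θ * r) * ‖x - y‖ ≤ θ * ‖(G x + Q x) - (G y + Q y)‖ := by
  have hGxy : ‖G (x - y)‖ ≤ ‖(G x + Q x) - (G y + Q y)‖ + L * r * ‖x - y‖ :=
    calc ‖G (x - y)‖ = ‖((G x + Q x) - (G y + Q y)) - (Q x - Q y)‖ := by
          rw [map_sub]; congr 1; abel
      _ ≤ ‖(G x + Q x) - (G y + Q y)‖ + ‖Q x - Q y‖ := norm_sub_le _ _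
      _ ≤ _ := by gcongr; exact norm_sub_le_mul_norm_sub_of_norm_le hL hQ hx hy
  linarith [hG (x - y), mul_le_mul_of_nonneg_left hGxy hθ.le]

theorem exists_quadratic_eq [CompleteSpace E] (hL : 0 < L) (hθ : 0 < θ)
    (hG : ∀ x, ‖x‖ ≤ θ * ‖G x‖) (hQ0 : Q 0 = 0)
    (hQ : ∀ x y, ‖Q x - Q y‖ ≤ L / 2 * (‖x‖ + ‖y‖) * ‖x - y‖)
    (hη : 2 * L * θ ^ 2 * η < 1) {g : F} (hg : ‖g‖ ≤ η) :
    ∃ x, ‖x‖ ≤ kantorovichRadius L θ η ∧ G x + Q x = g := by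
  set r := kantorovichRadius L θ η
  have hr : 0 ≤ r := kantorovichRadius_nonneg hL hθ ((norm_nonneg g).trans hg)
  have hGsymm : ∀ w, ‖G.symm w‖ ≤ θ * ‖w‖ := fun w ↦ by simpa using hG (G.symm w)
  let T : E → E := fun x ↦ G.symm (g - Q x)
  have hmaps : MapsTo T (Metric.closedBall 0 r) (Metric.closedBall 0 r) := by
    intro x hx
    rw [mem_closedBall_zero_iff] at hx ⊢
    have hQx : ‖Q x‖ ≤ L * r ^ 2 / 2 := by
      have hQx0 := hQ x 0
      simp only [hQ0, sub_zero, norm_zero, add_zero] at hQx0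
      calc ‖Q x‖ ≤ L / 2 * ‖x‖ * ‖x‖ := hQx0
        _ ≤ L / 2 * r * r := by gcongr
        _ = L * r ^ 2 / 2 := by ring
    calc ‖T x‖ ≤ θ * ‖g - Q x‖ := hGsymm _
      _ ≤ θ * (η + L * r ^ 2 / 2) := by
          gcongr; exact (norm_sub_le _ _).trans (add_le_add hg hQx)
      _ = r := mul_add_sq_kantorovichRadius hL hθ hη
  have hcontr : ContractingWith (L * θ * r).toNNReal (hmaps.restrict T _ _) := by
    refine ⟨Real.toNNReal_lt_one.2 (mul_kantorovichRadius_lt_one hL hθ hη),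
      LipschitzWith.of_dist_le_mul ?_⟩
    rintro ⟨x, hx⟩ ⟨y, hy⟩
    rw [mem_closedBall_zero_iff] at hx hy
    rw [Real.coe_toNNReal _ (by positivity)]
    simp only [Subtype.dist_eq, MapsTo.val_restrict_apply, dist_eq_norm]
    calc ‖T x - T y‖ = ‖G.symm (Q y - Q x)‖ := by
          simp only [T, ← map_sub, sub_sub_sub_cancel_left]
      _ ≤ θ * ‖Q y - Q x‖ := hGsymm _
      _ ≤ θ * (L * r * ‖x - y‖) := by
          rw [norm_sub_rev]; gcongr; exact norm_sub_le_mul_norm_sub_of_norm_le hL hQ hx hy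
      _ = L * θ * r * ‖x - y‖ := by ring
  obtain ⟨x, hx, hfix, -⟩ := hcontr.exists_fixedPoint' Metric.isClosed_closedBall.isComplete
    hmaps (Metric.mem_closedBall_self hr) (edist_ne_top _ _)
  have hGx : g - Q x = G x := G.symm_apply_eq.1 hfix
  exact ⟨x, mem_closedBall_zero_iff.1 hx, by rw [← hGx, sub_add_cancel]⟩

theorem exists_continuousOn_quadratic_eq [CompleteSpace E] (hL : 0 < L) (hθ : 0 < θ)
    (hG : ∀ x, ‖x‖ ≤ θ * ‖G x‖) (hQ0 : Q 0 = 0)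
    (hQ : ∀ x y, ‖Q x - Q y‖ ≤ L / 2 * (‖x‖ + ‖y‖) * ‖x - y‖)
    (hη₀ : 0 ≤ η) (hη : 2 * L * θ ^ 2 * η < 1) :
    ∃ x : F → E, ContinuousOn x (Metric.closedBall 0 η) ∧ x 0 = 0 ∧
      ∀ g ∈ Metric.closedBall 0 η,
        ‖x g‖ ≤ kantorovichRadius L θ η ∧ G (x g) + Q (x g) = g := by
  have hr : 0 < 1 - L * θ * kantorovichRadius L θ η :=
    sub_pos.2 (mul_kantorovichRadius_lt_one hL hθ hη)
  have hexists : ∀ g : F, ∃ x : E, g ∈ Metric.closedBall 0 η →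
      ‖x‖ ≤ kantorovichRadius L θ η ∧ G x + Q x = g := fun g ↦ by
    by_cases hg : g ∈ Metric.closedBall 0 η
    · obtain ⟨x, hx⟩ := exists_quadratic_eq hL hθ hG hQ0 hQ hη (mem_closedBall_zero_iff.1 hg)
      exact ⟨x, fun _ ↦ hx⟩
    · exact ⟨0, fun h ↦ absurd h hg⟩
  choose x hx using hexists
  refine ⟨x, ?_, ?_, hx⟩
  · refine LipschitzOnWith.continuousOn
      (LipschitzOnWith.of_dist_le' (K := θ / (1 - L * θ * kantorovichRadius L θ η)) ?_)
    intro g hg h hh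
    have hgh := mul_norm_sub_le_norm_add_quadratic hL hθ hG hQ (hx g hg).1 (hx h hh).1
    rw [(hx g hg).2, (hx h hh).2] at hgh
    rw [dist_eq_norm, dist_eq_norm, div_mul_eq_mul_div, le_div_iff₀ hr]
    linarith
  · have h0 := hx 0 (Metric.mem_closedBall_self hη₀)
    have hdist := mul_norm_sub_le_norm_add_quadratic hL hθ hG hQ h0.1
      (norm_zero.trans_le (kantorovichRadius_nonneg hL hθ hη₀))
    rw [h0.2, map_zero, hQ0, add_zero, sub_zero, sub_zero, norm_zero, mul_zero] at hdist
    exact norm_le_zero_iff.1 (nonpos_of_mul_nonpos_right hdist hr)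

end Kantorovich

section PosDef

open Topology RCLike
open scoped ComplexOrder

variable {ι 𝕜 : Type*} [RCLike 𝕜]

theorem isClosed_setOf_posSemidef [Finite ι] :
    IsClosed {M : Matrix ι ι 𝕜 | M.PosSemidef} := by
  have := Fintype.ofFinite ι
  simp only [posSemidef_iff_dotProduct_mulVec, ofPred_and, ofPred_forall]
  refine (isClosed_eq continuous_id.matrix_conjTranspose continuous_id).inter ?_
  refine isClosed_iInter fun v ↦ isClosed_le continuous_const ?_
  exact continuous_const.dotProduct (continuous_id.matrix_mulVec continuous_const)

theorem posDef_of_forall_norm_eq_one [Fintype ι] {M : Matrix ι ι 𝕜} (hM : M.IsHermitian)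
    (h : ∀ v : ι → 𝕜, ‖v‖ = 1 → 0 < re (star v ⬝ᵥ M *ᵥ v)) : M.PosDef := by
  refine .of_dotProduct_mulVec_pos hM fun v hv ↦ ?_
  refine RCLike.pos_iff.2 ⟨?_, hM.im_star_dotProduct_mulVec_self v⟩
  have hpos : 0 < ‖v‖⁻¹ := inv_pos.2 (norm_pos_iff.2 hv)
  have hunit : 0 < re (star (‖v‖⁻¹ • v) ⬝ᵥ M *ᵥ (‖v‖⁻¹ • v)) :=
    h _ (by rw [norm_smul, norm_inv, norm_norm, inv_mul_cancel₀ (norm_ne_zero_iff.2 hv)])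
  rw [star_smul, star_trivial, smul_dotProduct, mulVec_smul, dotProduct_smul, RCLike.smul_re,
    RCLike.smul_re] at hunit
  exact (mul_pos_iff_of_pos_left hpos).1 ((mul_pos_iff_of_pos_left hpos).1 hunit)

theorem eventually_posDef_of_isHermitian [Finite ι] {M₀ : Matrix ι ι 𝕜} (h₀ : M₀.PosDef) :
    ∀ᶠ M in 𝓝 M₀, M.IsHermitian → M.PosDef := by
  have := Fintype.ofFinite ι
  have hcont : Continuous fun p : Matrix ι ι 𝕜 × (ι → 𝕜) ↦ re (star p.2 ⬝ᵥ p.1 *ᵥ p.2) :=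
    continuous_re.comp
      (continuous_snd.star.dotProduct (continuous_fst.matrix_mulVec continuous_snd))
  have hsphere : ∀ᶠ M in 𝓝 M₀, ∀ v ∈ Metric.sphere (0 : ι → 𝕜) 1,
      0 < re (star v ⬝ᵥ M *ᵥ v) := by
    refine (isCompact_sphere (0 : ι → 𝕜) 1).eventually_forall_of_forall_eventually fun v hv ↦ ?_
    exact hcont.continuousAt.eventually
      (lt_mem_nhds (h₀.re_dotProduct_pos (ne_zero_of_mem_unit_sphere ⟨v, hv⟩)))
  filter_upwards [hsphere] with M hM hherm
  exact posDef_of_forall_norm_eq_one hherm fun v hv ↦ hM v (mem_sphere_zero_iff_norm.2 hv)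

variable [Fintype ι]

theorem eq_zero_of_mul_add_mul_eq_zero {X Z : Matrix ι ι 𝕜} (hX : X.PosDef)
    (h : X * Z + Z * X = 0) : Z = 0 := by
  classical
  have hXZ := hX.posSemidef.conjTranspose_mul_mul_same Z
  have hZX := hX.posSemidef.mul_mul_conjTranspose_same Z
  have htrace : (Zᴴ * X * Z).trace + (Z * X * Zᴴ).trace = 0 := by
    rw [trace_mul_comm (Z * X), mul_assoc, ← trace_add, ← mul_add, h, mul_zero, trace_zero]
  have hzero : Zᴴ * X * Z = 0 :=
    hXZ.trace_eq_zero_iff.1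
      ((add_eq_zero_iff_of_nonneg hXZ.trace_nonneg hZX.trace_nonneg).1 htrace).1
  by_contra hZ
  obtain ⟨v, hv⟩ : ∃ v, Z *ᵥ v ≠ 0 := by
    by_contra! hall
    exact hZ (ext_of_mulVec_single fun j ↦ by rw [hall, zero_mulVec])
  refine (hX.dotProduct_mulVec_pos hv).ne' ?_
  rw [star_mulVec, ← dotProduct_mulVec, mulVec_mulVec, mulVec_mulVec, hzero,
    zero_mulVec, dotProduct_zero]

variable [DecidableEq ι]

theorem posDef_of_isPreconnected {α : Type*} [TopologicalSpace α] {s : Set α}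
    (hs : IsPreconnected s) {M : α → Matrix ι ι 𝕜} (hM : ContinuousOn M s)
    (hherm : ∀ a ∈ s, (M a).IsHermitian) (hdet : ∀ a ∈ s, (M a).det ≠ 0) {a b : α} (ha : a ∈ s)
    (hb : b ∈ s) (hMa : (M a).PosDef) : (M b).PosDef := by
  have := isPreconnected_iff_preconnectedSpace.1 hs
  have hcont : Continuous fun c : s ↦ M c := hM.domRestrict
  have hclopen : IsClopen {c : s | (M c).PosDef} := by
    refine ⟨?_, isOpen_iff_eventually.2 fun c hc ↦ ?_⟩
    · convert isClosed_setOf_posSemidef.preimage hcont using 1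
      ext c
      exact ⟨PosDef.posSemidef, fun hc ↦ hc.posDef_iff_det_ne_zero.2 (hdet c c.2)⟩
    · filter_upwards [hcont.continuousAt.eventually (eventually_posDef_of_isHermitian hc)]
        with d hd using hd (hherm d d.2)
  exact eq_univ_iff_forall.1 (hclopen.eq_univ ⟨⟨a, ha⟩, hMa⟩) ⟨b, hb⟩

theorem det_ne_zero_of_posDef_mul_add_mul {X S : Matrix ι ι 𝕜} (hX : X.IsHermitian)
    (h : (X * S + S * X).PosDef) : X.det ≠ 0 := by
  intro hdet
  obtain ⟨v, hv, hXv⟩ := exists_mulVec_eq_zero_iff.2 hdet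
  have hvX : star v ᵥ* X = 0 := by rw [← hX.eq, ← star_mulVec, hXv, star_zero]
  refine (h.dotProduct_mulVec_pos hv).ne' ?_
  rw [add_mulVec, ← mulVec_mulVec, ← mulVec_mulVec, hXv, mulVec_zero, add_zero,
    dotProduct_mulVec, hvX, zero_dotProduct]

theorem mul_eq_smul_one_of_mul_add_mul {X S : Matrix ι ι 𝕜} {c : 𝕜} (hX : X.PosDef)
    (h : X * S + S * X = (2 * c) • (1 : Matrix ι ι 𝕜)) : X * S = c • (1 : Matrix ι ι 𝕜) := by
  have hcommutator : X * (X * S - S * X) + (X * S - S * X) * X = 0 := by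
    have hcomm : X * (X * S + S * X) = (X * S + S * X) * X := by
      rw [h, mul_smul_comm, smul_mul_assoc, mul_one, one_mul]
    rw [← sub_eq_zero.2 hcomm]
    noncomm_ring
  have hXS : X * S = S * X := sub_eq_zero.1 (eq_zero_of_mul_add_mul_eq_zero hX hcommutator)
  rw [← hXS, ← two_smul 𝕜, mul_smul] at h
  exact smul_right_injective _ two_ne_zero h

theorem mul_inv_smul_eq_one {X S : Matrix ι ι 𝕜} {c : 𝕜} (hc : c ≠ 0)
    (h : X * S = c • (1 : Matrix ι ι 𝕜)) : X * (c⁻¹ • S) = 1 := by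
  rw [mul_smul_comm, h, smul_smul, inv_mul_cancel₀ hc, one_smul]

theorem mul_eq_smul_one_comm {X S : Matrix ι ι 𝕜} {c : 𝕜} (hc : c ≠ 0)
    (h : X * S = c • (1 : Matrix ι ι 𝕜)) : S * X = c • (1 : Matrix ι ι 𝕜) := by
  rw [← mul_eq_one_comm.1 (mul_inv_smul_eq_one hc h), smul_mul_assoc, smul_smul,
    mul_inv_cancel₀ hc, one_smul]

theorem posDef_left_of_mul_eq_smul_one {X S : Matrix ι ι 𝕜} {c : 𝕜} (hc : c ≠ 0)
    (hX : X.PosSemidef) (h : X * S = c • (1 : Matrix ι ι 𝕜)) : X.PosDef :=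
  hX.posDef_iff_det_ne_zero.2 (det_ne_zero_of_right_inverse (mul_inv_smul_eq_one hc h))

theorem posDef_right_of_mul_eq_smul_one {X S : Matrix ι ι 𝕜} {c : 𝕜} (hc : 0 < c)
    (hX : X.PosDef) (h : X * S = c • (1 : Matrix ι ι 𝕜)) : S.PosDef := by
  have hS : c • X⁻¹ = S := by
    rw [inv_eq_right_inv (mul_inv_smul_eq_one hc.ne' h), smul_smul, mul_inv_cancel₀ hc.ne',
      one_smul]
  exact hS ▸ hX.inv.smul hc

end PosDef

section Theta

variable {n m : ℕ} {A : Fin m → Matrix (Fin n) (Fin n) ℝ} {X S : Matrix (Fin n) (Fin n) ℝ}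

theorem thetaMu_nonneg : 0 ≤ thetaMu A X S :=
  Real.sInf_nonneg fun _ ht ↦ ht.1

theorem sqrt_le_thetaMu_mul_sqrt (hθ : thetaMu A X S ≠ 0) {DX DS : Matrix (Fin n) (Fin n) ℝ}
    (Dy : Fin m → ℝ) (hDX : DX.IsSymm) (hDS : DS.IsSymm) :
    √(frobNorm DX ^ 2 + (∑ i, Dy i ^ 2) + frobNorm DS ^ 2) ≤
      thetaMu A X S * √((∑ i, (A i * DX).trace ^ 2) + frobNorm ((∑ i, Dy i • A i) + DS) ^ 2 +
        frobNorm ((1 / 2 : ℝ) • (DX * S + S * DX + X * DS + DS * X)) ^ 2) := by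
  refine (IsClosed.csInf_mem ?_ ?_ ⟨0, fun _ ht ↦ ht.1⟩ : thetaMu A X S ∈ _).2 DX DS Dy hDX hDS
  · simp only [ofPred_and, ofPred_forall]
    refine isClosed_Ici.inter ?_
    refine isClosed_iInter fun _ ↦ isClosed_iInter fun _ ↦ isClosed_iInter fun _ ↦
      isClosed_iInter fun _ ↦ isClosed_iInter fun _ ↦ isClosed_le continuous_const ?_
    exact continuous_id.mul continuous_const
  · refine nonempty_iff_ne_empty.2 fun hempty ↦ hθ ?_
    rw [thetaMu, hempty, Real.sInf_empty]

end Theta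

section SymmetricTriples

theorem mul_add_mul_le_mul_of_sq_add_sq_le {a b c d p q : ℝ} (hp : 0 ≤ p) (hq : 0 ≤ q)
    (hab : a ^ 2 + b ^ 2 ≤ p ^ 2) (hcd : c ^ 2 + d ^ 2 ≤ q ^ 2) : a * d + b * c ≤ p * q := by
  refine le_of_sq_le_sq ?_ (mul_nonneg hp hq)
  calc (a * d + b * c) ^ 2 ≤ (a ^ 2 + b ^ 2) * (c ^ 2 + d ^ 2) := by
        nlinarith [sq_nonneg (a * c - b * d)]
    _ ≤ p ^ 2 * q ^ 2 := by gcongr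
    _ = (p * q) ^ 2 := (mul_pow ..).symm

attribute [local instance] Matrix.frobeniusNormedAddCommGroup Matrix.frobeniusNormedSpace

theorem frobNorm_eq_norm {α β : Type*} [Fintype α] [Fintype β] (M : Matrix α β ℝ) :
    frobNorm M = ‖M‖ := by
  simp only [frobNorm, frobenius_norm_def, Real.sqrt_eq_rpow, Real.norm_eq_abs, Real.rpow_two,
    sq_abs]

/-- The real symmetric matrices indexed by `ι`, the paper's `S^n`, as a subspace so that it carries
the Frobenius norm. -/
def symmetricMatrix (ι : Type*) : Submodule ℝ (Matrix ι ι ℝ) where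
  carrier := {M | M.IsSymm}
  add_mem' := IsSymm.add
  zero_mem' := isSymm_zero
  smul_mem' c _ hM := hM.smul c

variable {ι κ : Type*}

/-- Triples `(ΔX, Δy, ΔS)` with the norm `(‖ΔX‖² + ‖Δy‖² + ‖ΔS‖²)^{1/2}`. Residuals of the
optimality system live in the same space, ordered as complementarity, primal, dual. -/
abbrev SymmetricTriple (ι κ : Type*) :=
  WithLp 2 (symmetricMatrix ι × WithLp 2 (EuclideanSpace ℝ κ × symmetricMatrix ι))

theorem symmetricTriple_ext {z w : SymmetricTriple ι κ} (hX : z.fst = w.fst)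
    (hy : ∀ i, z.snd.fst i = w.snd.fst i) (hS : z.snd.snd = w.snd.snd) : z = w :=
  WithLp.ofLp_injective 2 <| Prod.ext hX <| WithLp.ofLp_injective 2 <|
    Prod.ext (PiLp.ext hy) hS

/-- The residual `(0, 0, D)` by which a change `D` of the dual right-hand side enters the optimality
system. -/
noncomputable def dualResidual (κ : Type*) (D : symmetricMatrix ι) : SymmetricTriple ι κ :=
  .toLp 2 (0, .toLp 2 (0, D))

theorem continuous_dualResidual : Continuous (dualResidual κ (ι := ι)) := by
  unfold dualResidual
  fun_prop

variable [Fintype ι]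

/-- The Jordan product `(X S + S X) / 2` of symmetric matrices, through which the complementarity
equation and its linearization are expressed. -/
noncomputable def jordanProduct :
    symmetricMatrix ι →ₗ[ℝ] symmetricMatrix ι →ₗ[ℝ] symmetricMatrix ι :=
  LinearMap.mk₂ ℝ
    (fun X S ↦ ⟨(1 / 2 : ℝ) • (X.1 * S.1 + S.1 * X.1), IsSymm.smul (by
      rw [IsSymm, transpose_add, transpose_mul, transpose_mul, X.2.eq, S.2.eq, add_comm]) _⟩)
    (fun X X' S ↦ Subtype.ext <| by
      simp only [Submodule.coe_add, ← smul_add]; congr 1; noncomm_ring)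
    (fun c X S ↦ Subtype.ext <| by
      simp only [Submodule.coe_smul, smul_mul_assoc, mul_smul_comm, ← smul_add, smul_comm c])
    (fun X S S' ↦ Subtype.ext <| by
      simp only [Submodule.coe_add, ← smul_add]; congr 1; noncomm_ring)
    (fun c X S ↦ Subtype.ext <| by
      simp only [Submodule.coe_smul, smul_mul_assoc, mul_smul_comm, ← smul_add, smul_comm c])

theorem coe_jordanProduct (X S : symmetricMatrix ι) :
    (jordanProduct X S : Matrix ι ι ℝ) = (1 / 2 : ℝ) • ((X : Matrix ι ι ℝ) * S + S * X) :=
  rfl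

theorem two_smul_coe_jordanProduct (X S : symmetricMatrix ι) :
    (2 : ℝ) • (jordanProduct X S : Matrix ι ι ℝ) = X.1 * S.1 + S.1 * X.1 := by
  rw [coe_jordanProduct, smul_smul, mul_one_div_cancel two_ne_zero, one_smul]

theorem norm_jordanProduct_le (X S : symmetricMatrix ι) :
    ‖jordanProduct X S‖ ≤ ‖X‖ * ‖S‖ := by
  have hsum : ‖(X : Matrix ι ι ℝ) * S + S * X‖ ≤ 2 * (‖X‖ * ‖S‖) :=
    calc ‖(X : Matrix ι ι ℝ) * S + S * X‖
        ≤ ‖(X : Matrix ι ι ℝ)‖ * ‖(S : Matrix ι ι ℝ)‖ +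
            ‖(S : Matrix ι ι ℝ)‖ * ‖(X : Matrix ι ι ℝ)‖ :=
          norm_add_le_of_le (frobenius_norm_mul _ _) (frobenius_norm_mul _ _)
      _ = 2 * (‖X‖ * ‖S‖) := by simp only [Submodule.coe_norm]; ring
  rw [Submodule.coe_norm, coe_jordanProduct, norm_smul, Real.norm_of_nonneg (by norm_num)]
  linarith

/-- The second-order part of the optimality system at a central solution. -/
noncomputable def centralRemainder (z : SymmetricTriple ι κ) : SymmetricTriple ι κ :=
  .toLp 2 (jordanProduct z.fst z.snd.snd, 0)

theorem centralRemainder_sub (z w : SymmetricTriple ι κ) :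
    centralRemainder z - centralRemainder w =
      .toLp 2 ((1 / 2 : ℝ) • (jordanProduct (z + w).fst (z - w).snd.snd +
        jordanProduct (z - w).fst (z + w).snd.snd), 0) := by
  refine symmetricTriple_ext ?_ (fun i ↦ ?_) ?_
  · simp only [centralRemainder, WithLp.toLp_fst, WithLp.sub_fst, WithLp.add_fst,
      WithLp.sub_snd, WithLp.add_snd, map_add, map_sub, LinearMap.add_apply,
      LinearMap.sub_apply]
    module
  · exact sub_zero _
  · exact sub_zero _

variable [Fintype κ]

theorem norm_fst_sq_add_norm_snd_snd_sq_le (z : SymmetricTriple ι κ) :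
    ‖z.fst‖ ^ 2 + ‖z.snd.snd‖ ^ 2 ≤ ‖z‖ ^ 2 := by
  rw [WithLp.prod_norm_sq_eq_of_L2 z]
  gcongr
  exact WithLp.norm_snd_le _ _

/-- The Jacobian `J(X, y, S)` of the optimality system; it does not depend on `y`. -/
noncomputable def centralJacobian (A : κ → symmetricMatrix ι) (X S : symmetricMatrix ι) :
    SymmetricTriple ι κ →ₗ[ℝ] SymmetricTriple ι κ where
  toFun z := .toLp 2 (jordanProduct z.fst S + jordanProduct X z.snd.snd,
    .toLp 2 (.toLp 2 fun i ↦ ((A i : Matrix ι ι ℝ) * z.fst).trace,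
      ∑ i, z.snd.fst i • A i + z.snd.snd))
  map_add' z w := by
    refine symmetricTriple_ext ?_ (fun i ↦ ?_) ?_
    · simp only [WithLp.toLp_fst, WithLp.add_fst, WithLp.add_snd, map_add, LinearMap.add_apply]
      abel
    · simp only [WithLp.toLp_fst, WithLp.toLp_snd, WithLp.add_fst, WithLp.add_snd,
        PiLp.add_apply, Submodule.coe_add, mul_add, trace_add]
    · simp only [WithLp.toLp_snd, WithLp.add_fst, WithLp.add_snd, PiLp.add_apply, add_smul,
        Finset.sum_add_distrib]
      abel
  map_smul' c z := by
    refine symmetricTriple_ext ?_ (fun i ↦ ?_) ?_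
    · simp only [WithLp.toLp_fst, WithLp.smul_fst, WithLp.smul_snd, map_smul,
        LinearMap.smul_apply, smul_add, RingHom.id_apply]
    · simp only [WithLp.toLp_fst, WithLp.toLp_snd, WithLp.smul_fst, WithLp.smul_snd,
        PiLp.smul_apply, Submodule.coe_smul, mul_smul_comm, trace_smul, RingHom.id_apply]
    · simp only [WithLp.toLp_snd, WithLp.smul_fst, WithLp.smul_snd, PiLp.smul_apply,
        smul_eq_mul, mul_smul, smul_add, Finset.smul_sum, RingHom.id_apply]

theorem norm_centralRemainder_sub_le (z w : SymmetricTriple ι κ) :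
    ‖centralRemainder z - centralRemainder w‖ ≤ 1 / 2 * (‖z‖ + ‖w‖) * ‖z - w‖ := by
  have hpolar : ‖jordanProduct (z + w).fst (z - w).snd.snd +
      jordanProduct (z - w).fst (z + w).snd.snd‖ ≤ ‖z + w‖ * ‖z - w‖ := by
    refine (norm_add_le_of_le (norm_jordanProduct_le _ _) (norm_jordanProduct_le _ _)).trans ?_
    rw [mul_comm ‖(z - w).fst‖]
    exact mul_add_mul_le_mul_of_sq_add_sq_le (norm_nonneg _) (norm_nonneg _)
      (norm_fst_sq_add_norm_snd_snd_sq_le _) (norm_fst_sq_add_norm_snd_snd_sq_le _)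
  rw [centralRemainder_sub, WithLp.norm_toLp_fst, norm_smul, Real.norm_of_nonneg (by norm_num),
    mul_assoc]
  gcongr
  exact hpolar.trans (by gcongr; exact norm_add_le z w)

theorem norm_dualResidual (D : symmetricMatrix ι) : ‖dualResidual κ D‖ = ‖D‖ := by
  rw [dualResidual, WithLp.norm_toLp_snd, WithLp.norm_toLp_snd]

theorem norm_symmetricTriple (z : SymmetricTriple ι κ) :
    ‖z‖ = √(‖z.fst‖ ^ 2 + (∑ i, z.snd.fst i ^ 2) + ‖z.snd.snd‖ ^ 2) := by
  rw [← Real.sqrt_sq (norm_nonneg z), WithLp.prod_norm_sq_eq_of_L2, WithLp.prod_norm_sq_eq_of_L2,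
    EuclideanSpace.real_norm_sq_eq, add_assoc]

theorem norm_centralJacobian (A : κ → symmetricMatrix ι) (X S : symmetricMatrix ι)
    (z : SymmetricTriple ι κ) :
    ‖centralJacobian A X S z‖ = √((∑ i, (A i * z.fst : Matrix ι ι ℝ).trace ^ 2) +
      ‖∑ i, z.snd.fst i • A i + z.snd.snd‖ ^ 2 +
      ‖jordanProduct z.fst S + jordanProduct X z.snd.snd‖ ^ 2) := by
  rw [norm_symmetricTriple, add_assoc, add_comm]
  rfl

theorem norm_le_thetaMu_mul_norm_centralJacobian {n m : ℕ} {A : Fin m → symmetricMatrix (Fin n)}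
    {X S : symmetricMatrix (Fin n)}
    (hθ : thetaMu (fun i ↦ (A i : Matrix (Fin n) (Fin n) ℝ)) X.1 S.1 ≠ 0)
    (z : SymmetricTriple (Fin n) (Fin m)) :
    ‖z‖ ≤ thetaMu (fun i ↦ (A i : Matrix (Fin n) (Fin n) ℝ)) X.1 S.1 *
      ‖centralJacobian A X S z‖ := by
  have h := sqrt_le_thetaMu_mul_sqrt hθ z.snd.fst z.fst.2 z.snd.snd.2
  have hcompl : (1 / 2 : ℝ) • (z.fst.1 * S.1 + S.1 * z.fst.1 + X.1 * z.snd.snd.1 +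
      z.snd.snd.1 * X.1) = (jordanProduct z.fst S + jordanProduct X z.snd.snd).1 := by
    rw [Submodule.coe_add, coe_jordanProduct, coe_jordanProduct, ← smul_add, add_assoc (_ + _)]
  rw [hcompl] at h
  rw [norm_symmetricTriple, norm_centralJacobian]
  simpa only [frobNorm_eq_norm, ← Submodule.coe_smul, ← Submodule.coe_sum, ← Submodule.coe_add,
    ← Submodule.coe_norm] using h

theorem centralJacobian_add_centralRemainder_eq_dualResidual_iff {A : κ → symmetricMatrix ι}
    {X S D : symmetricMatrix ι} {z : SymmetricTriple ι κ} :
    centralJacobian A X S z + centralRemainder z = dualResidual κ D ↔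
      jordanProduct (X + z.fst) (S + z.snd.snd) = jordanProduct X S ∧
        (∀ i, (A i * z.fst : Matrix ι ι ℝ).trace = 0) ∧
          ∑ i, z.snd.fst i • A i + z.snd.snd = D := by
  have hexpand : jordanProduct (X + z.fst) (S + z.snd.snd) = jordanProduct X S +
      (jordanProduct z.fst S + jordanProduct X z.snd.snd + jordanProduct z.fst z.snd.snd) := by
    simp only [map_add, LinearMap.add_apply]
    abel
  rw [hexpand, add_eq_left]
  constructor
  · intro h
    exact ⟨congrArg WithLp.fst h,
      fun i ↦ (add_zero _).symm.trans (congrArg (fun w ↦ w.snd.fst i) h),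
      (add_zero _).symm.trans (congrArg (fun w ↦ w.snd.snd) h)⟩
  · rintro ⟨hcompl, hprimal, hdual⟩
    exact symmetricTriple_ext hcompl (fun i ↦ (add_zero _).trans (hprimal i))
      ((add_zero _).trans hdual)

theorem exists_continuousOn_centralJacobian_add_centralRemainder_eq {A : κ → symmetricMatrix ι}
    {X S : symmetricMatrix ι} {θ η : ℝ} (hθ : 0 < θ)
    (hJ : ∀ z, ‖z‖ ≤ θ * ‖centralJacobian A X S z‖) (hη₀ : 0 ≤ η) (hη : 2 * θ ^ 2 * η < 1) :
    ∃ z : symmetricMatrix ι → SymmetricTriple ι κ, ContinuousOn z (Metric.closedBall 0 η) ∧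
      z 0 = 0 ∧ ∀ D ∈ Metric.closedBall 0 η, ‖z D‖ ≤ kantorovichRadius 1 θ η ∧
        centralJacobian A X S (z D) + centralRemainder (z D) = dualResidual κ D := by
  have hinj : Function.Injective (centralJacobian A X S) := by
    refine (injective_iff_map_eq_zero _).2 fun z hz ↦ norm_le_zero_iff.1 ?_
    simpa only [hz, norm_zero, mul_zero] using hJ z
  have hzero : centralRemainder (0 : SymmetricTriple ι κ) = 0 := by
    simp only [centralRemainder, WithLp.zero_fst, map_zero, LinearMap.zero_apply]
    rfl
  obtain ⟨z, hcont, hz0, hz⟩ := exists_continuousOn_quadratic_eq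
    (G := LinearEquiv.ofInjectiveEndo (centralJacobian A X S) hinj) one_pos hθ hJ hzero
    norm_centralRemainder_sub_le hη₀ (by rwa [mul_one])
  have hball : MapsTo (dualResidual κ) (Metric.closedBall (0 : symmetricMatrix ι) η)
      (Metric.closedBall 0 η) := fun D hD ↦ by
    rwa [mem_closedBall_zero_iff, norm_dualResidual, ← mem_closedBall_zero_iff]
  exact ⟨z ∘ dualResidual κ, hcont.comp continuous_dualResidual.continuousOn hball, hz0,
    fun D hD ↦ hz _ (hball hD)⟩

theorem posDef_of_posDef_jordanProduct {α : Type*} [TopologicalSpace α]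
    {s : Set α} (hs : IsPreconnected s) {X S : α → symmetricMatrix ι} (hX : ContinuousOn X s)
    (hXS : ∀ a ∈ s, (jordanProduct (X a) (S a)).1.PosDef) {a b : α} (ha : a ∈ s) (hb : b ∈ s)
    (hXa : (X a).1.PosDef) : (X b).1.PosDef := by
  classical
  refine posDef_of_isPreconnected hs (M := fun c ↦ (X c).1)
    (continuous_subtype_val.comp_continuousOn hX) (fun c _ ↦ (X c).2) (fun c hc ↦ ?_) ha hb hXa
  refine det_ne_zero_of_posDef_mul_add_mul (S := (S c).1) (X c).2 ?_
  rw [← two_smul_coe_jordanProduct]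
  exact (hXS c hc).smul two_pos

theorem exists_posDef_mul_eq_smul_one [DecidableEq ι] {A : κ → symmetricMatrix ι}
    {X S D : symmetricMatrix ι} {θ μ : ℝ} (hθ : 0 < θ)
    (hJ : ∀ z, ‖z‖ ≤ θ * ‖centralJacobian A X S z‖) (hμ : 0 < μ) (hX : X.1.PosDef)
    (hXS : X.1 * S.1 = μ • 1) (hD : 2 * θ ^ 2 * ‖D‖ < 1) :
    ∃ z : SymmetricTriple ι κ, ‖z‖ ≤ kantorovichRadius 1 θ ‖D‖ ∧ (X + z.fst).1.PosDef ∧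
      (X + z.fst).1 * (S + z.snd.snd).1 = μ • 1 ∧
      (∀ i, (A i * z.fst : Matrix ι ι ℝ).trace = 0) ∧ ∑ i, z.snd.fst i • A i + z.snd.snd = D := by
  obtain ⟨z, hcont, hz0, hz⟩ :=
    exists_continuousOn_centralJacobian_add_centralRemainder_eq hθ hJ (norm_nonneg D) hD
  have hmem : D ∈ Metric.closedBall 0 ‖D‖ := mem_closedBall_zero_iff.2 le_rfl
  have hjordan : (jordanProduct X S).1 = μ • 1 := by
    rw [coe_jordanProduct, hXS, mul_eq_smul_one_comm hμ.ne' hXS, ← two_smul ℝ, smul_smul,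
      one_div_mul_cancel two_ne_zero, one_smul]
  have hcompl : ∀ D' ∈ Metric.closedBall 0 ‖D‖,
      (jordanProduct (X + (z D').fst) (S + (z D').snd.snd)).1 = μ • 1 := fun D' hD' ↦ by
    rw [(centralJacobian_add_centralRemainder_eq_dualResidual_iff.1 (hz D' hD').2).1, hjordan]
  have hpos : (X + (z D).fst).1.PosDef := by
    refine posDef_of_posDef_jordanProduct (convex_closedBall 0 ‖D‖).isPreconnected
      (X := fun D' ↦ X + (z D').fst) (S := fun D' ↦ S + (z D').snd.snd) ?_ (fun D' hD' ↦ ?_)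
      (Metric.mem_closedBall_self (norm_nonneg D)) hmem ?_
    · exact continuousOn_const.add ((WithLp.continuous_fst 2 _ _).comp_continuousOn hcont)
    · rw [hcompl D' hD']
      exact PosDef.one.smul hμ
    · rwa [hz0, WithLp.zero_fst, add_zero]
  obtain ⟨-, hprimal, hdual⟩ :=
    centralJacobian_add_centralRemainder_eq_dualResidual_iff.1 (hz D hmem).2
  refine ⟨z D, (hz D hmem).1, hpos, mul_eq_smul_one_of_mul_add_mul hpos ?_, hprimal, hdual⟩
  rw [← two_smul_coe_jordanProduct, hcompl D hmem, smul_smul]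

section CentralSolutions

variable {n m : ℕ} {C Cbar : Matrix (Fin n) (Fin n) ℝ} {A : Fin m → Matrix (Fin n) (Fin n) ℝ}
  {b : Fin m → ℝ} {ε μ : ℝ} {X S DX DS : Matrix (Fin n) (Fin n) ℝ} {y Dy : Fin m → ℝ}

theorem CentralSol.posDef (h : CentralSol C Cbar A b ε μ X y S) (hμ : 0 < μ) : X.PosDef :=
  posDef_left_of_mul_eq_smul_one hμ.ne' h.1.2.2 h.2.2

theorem CentralSol.add (h : CentralSol C Cbar A b 0 μ X y S) (hμ : 0 < μ)
    (hX : (X + DX).PosDef) (hDX : ∀ i, (A i * DX).trace = 0) (hDS : DS.IsSymm)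
    (hdual : ∑ i, Dy i • A i + DS = ε • Cbar) (hcompl : (X + DX) * (S + DS) = μ • 1) :
    CentralSol C Cbar A b ε μ (X + DX) (y + Dy) (S + DS) := by
  obtain ⟨⟨-, hAX, -⟩, ⟨hS, hyS, -⟩, -⟩ := h
  refine ⟨⟨hX.isHermitian, fun i ↦ ?_, hX.posSemidef⟩, ⟨hS.add hDS, ?_, ?_⟩, hcompl⟩
  · rw [mul_add, trace_add, hAX, hDX, add_zero]
  · rw [zero_smul, add_zero] at hyS
    simp only [Pi.add_apply, add_smul, Finset.sum_add_distrib]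
    rw [add_add_add_comm, hyS, hdual]
  · exact (posDef_right_of_mul_eq_smul_one hμ hX hcompl).posSemidef

end CentralSolutions

theorem stmt11_general {n m : ℕ} {C Cbar : Matrix (Fin n) (Fin n) ℝ}
    {A : Fin m → Matrix (Fin n) (Fin n) ℝ} {b : Fin m → ℝ} (hCbar : Cbar.IsSymm)
    (hA : ∀ i, (A i).IsSymm) {μ : ℝ} (hμ : 0 < μ) {Xμ Sμ : Matrix (Fin n) (Fin n) ℝ}
    {yμ : Fin m → ℝ} (hcent : CentralSol C Cbar A b 0 μ Xμ yμ Sμ) {θ : ℝ}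
    (hθ : θ = thetaMu A Xμ Sμ) (hθ0 : 0 < θ) {ε : ℝ}
    (hε : 2 * |ε| * θ ^ 2 * frobNorm Cbar < 1) :
    ∃ (Xε Sε : Matrix (Fin n) (Fin n) ℝ) (yε : Fin m → ℝ),
      CentralSol C Cbar A b ε μ Xε yε Sε ∧
      frobNorm (Xε - Xμ) ≤ (1 - √(1 - 2 * |ε| * θ ^ 2 * frobNorm Cbar)) / θ ∧
      frobNorm (Sε - Sμ) ≤ (1 - √(1 - 2 * |ε| * θ ^ 2 * frobNorm Cbar)) / θ := by
  lift Cbar to symmetricMatrix (Fin n) using hCbar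
  lift A to Fin m → symmetricMatrix (Fin n) using hA
  lift Xμ to symmetricMatrix (Fin n) using hcent.1.1
  lift Sμ to symmetricMatrix (Fin n) using hcent.2.1.1
  have hη : 2 * θ ^ 2 * ‖ε • Cbar‖ = 2 * |ε| * θ ^ 2 * frobNorm Cbar.1 := by
    rw [frobNorm_eq_norm, ← Submodule.coe_norm, norm_smul, Real.norm_eq_abs]
    ring
  have hJ : ∀ z, ‖z‖ ≤ θ * ‖centralJacobian A Xμ Sμ z‖ := by
    rw [hθ] at hθ0 ⊢
    exact norm_le_thetaMu_mul_norm_centralJacobian hθ0.ne'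
  obtain ⟨z, hz, hpos, hcompl, hprimal, hdual⟩ :=
    exists_posDef_mul_eq_smul_one hθ0 hJ hμ (hcent.posDef hμ) hcent.2.2 (hη ▸ hε)
  rw [kantorovichRadius, mul_one, one_mul, hη] at hz
  have hdual' : ∑ i, z.snd.fst i • (A i).1 + z.snd.snd.1 = ε • Cbar.1 := by
    rw [← Submodule.coe_smul, ← hdual, Submodule.coe_add, Submodule.coe_sum]
    rfl
  refine ⟨Xμ + z.fst, Sμ + z.snd.snd, yμ + z.snd.fst,
    hcent.add hμ hpos hprimal z.snd.snd.2 hdual' hcompl, ?_, ?_⟩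
  · rw [add_sub_cancel_left, frobNorm_eq_norm]
    exact (WithLp.norm_fst_le _ z).trans hz
  · rw [add_sub_cancel_left, frobNorm_eq_norm]
    exact ((WithLp.norm_snd_le _ z.snd).trans (WithLp.norm_snd_le _ z)).trans hz

end SymmetricTriples

theorem pos_and_mul_lt_one_of_abs_lt_one_div {ε θ c : ℝ} (hθ : 0 ≤ θ)
    (hε : |ε| < 1 / (2 * θ ^ 2 * c)) : 0 < θ ∧ 2 * |ε| * θ ^ 2 * c < 1 := by
  have hpos : 0 < 2 * θ ^ 2 * c := one_div_pos.1 ((abs_nonneg ε).trans_lt hε)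
  refine ⟨hθ.lt_of_ne' fun h ↦ hpos.ne' (by rw [h]; ring), ?_⟩
  rw [lt_div_iff₀ hpos] at hε
  linarith

/-- Kantorovich-type bound on the perturbation of the central solution. -/
theorem stmt11 {n m : ℕ} (C Cbar : Matrix (Fin n) (Fin n) ℝ)
    (A : Fin m → Matrix (Fin n) (Fin n) ℝ) (b : Fin m → ℝ)
    (hSA : StandingAssumptions C Cbar A b) (hCbar0 : Cbar ≠ 0)
    (μ : ℝ) (hμ : 0 < μ)
    (Xμ Sμ : Matrix (Fin n) (Fin n) ℝ) (yμ : Fin m → ℝ)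
    (hcent : CentralSol C Cbar A b 0 μ Xμ yμ Sμ)
    (Xs Ss : Matrix (Fin n) (Fin n) ℝ) (ys : Fin m → ℝ)
    (hmc : MaxComp C Cbar A b 0 Xs ys Ss)
    (nB nT nN : ℕ)
    (hnB : nB = Module.finrank ℝ (LinearMap.range Xs.mulVecLin))
    (hnN : nN = Module.finrank ℝ (LinearMap.range Ss.mulVecLin))
    (hnT : nB + nT + nN = n)
    (φ ψ : Fin n → ℝ) (hφ : Antitone φ) (hψ : Antitone ψ)
    (QX QS : Matrix (Fin n) (Fin n) ℝ)
    (hQXorth : QXᵀ * QX = 1) (hQXd : Xμ * QX = QX * Matrix.diagonal φ)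
    (hQSorth : QSᵀ * QS = 1) (hQSd : Sμ * QS = QS * Matrix.diagonal ψ)
    (δ θ : ℝ)
    (hδ : δ = sInf ((fun i : Fin n => φ i) '' {i : Fin n | (i : ℕ) < nB + nT} ∪
      (fun i : Fin n => ψ i) '' {i : Fin n | (i : ℕ) < nN}))
    (hθ : θ = thetaMu A Xμ Sμ)
    (ε : ℝ)
    (hε : |ε| < min (δ / (2 * θ * frobNorm Cbar)) (1 / (2 * θ ^ 2 * frobNorm Cbar))) :
    ∃ (Xε Sε : Matrix (Fin n) (Fin n) ℝ) (yε : Fin m → ℝ),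
      CentralSol C Cbar A b ε μ Xε yε Sε ∧
      frobNorm (Xε - Xμ) ≤ (1 - Real.sqrt (1 - 2 * |ε| * θ ^ 2 * frobNorm Cbar)) / θ ∧
      frobNorm (Sε - Sμ) ≤ (1 - Real.sqrt (1 - 2 * |ε| * θ ^ 2 * frobNorm Cbar)) / θ := by
  obtain ⟨hθ0, hε'⟩ :=
    pos_and_mul_lt_one_of_abs_lt_one_div (hθ ▸ thetaMu_nonneg) (lt_min_iff.1 hε).2
  exact stmt11_general hSA.2.1 hSA.2.2.1 hμ hcent hθ hθ0 hε'
end
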